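/- (Local boundedness) Let V ∈ L^p(Ω) with 1 < p < ∞ and V ≥ 0 a.e., let f ∈ L²(Ω), and let u ∈ H₀(Ω) be a weak solution of −(y^{2α₁}∂ₓ²u + x^{2α₂}∂_y²u) + V u = f, i.e. a(u,v) = ∫_Ω f v dxdy for all v ∈ H₀(Ω). Then for every point s₀ ∈ Ω and r > 0 with the closed ball B_{4r}(s₀) contained in Ω, there exists a constant C > 0 such that ess sup_{B_r(s₀)} |u| ≤ C (‖u‖_{L²(B_{2r}(s₀))} + ‖f‖_{L²(Ω)}). -/

import Mathlib

open MeasureTheory Set Filter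

noncomputable section

/-- The open unit square `Ω = (0,1) × (0,1)` in `ℝ²`. -/
def Omega : Set (ℝ × ℝ) := Ioo (0:ℝ) 1 ×ˢ Ioo (0:ℝ) 1

/-- Test functions on a set `s`: smooth with compact support contained in `s`. -/
def IsTestOn (s : Set (ℝ × ℝ)) (φ : ℝ × ℝ → ℝ) : Prop :=
  ContDiff ℝ (⊤ : ℕ∞) φ ∧ HasCompactSupport φ ∧ tsupport φ ⊆ s

/-- Classical partial derivative in the `x`-direction. -/
def pdx (φ : ℝ × ℝ → ℝ) (p : ℝ × ℝ) : ℝ := fderiv ℝ φ p (1, 0)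

/-- Classical partial derivative in the `y`-direction. -/
def pdy (φ : ℝ × ℝ → ℝ) (p : ℝ × ℝ) : ℝ := fderiv ℝ φ p (0, 1)

/-- `g` is a weak `x`-partial derivative of `u` on `s`. -/
def HasWeakDerivXOn (s : Set (ℝ × ℝ)) (u g : ℝ × ℝ → ℝ) : Prop :=
  LocallyIntegrableOn u s volume ∧ LocallyIntegrableOn g s volume ∧
  ∀ φ : ℝ × ℝ → ℝ, IsTestOn s φ →
    ∫ p in s, u p * pdx φ p = - ∫ p in s, g p * φ p

/-- `g` is a weak `y`-partial derivative of `u` on `s`. -/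
def HasWeakDerivYOn (s : Set (ℝ × ℝ)) (u g : ℝ × ℝ → ℝ) : Prop :=
  LocallyIntegrableOn u s volume ∧ LocallyIntegrableOn g s volume ∧
  ∀ φ : ℝ × ℝ → ℝ, IsTestOn s φ →
    ∫ p in s, u p * pdy φ p = - ∫ p in s, g p * φ p

/-- Test functions on `Ω`. -/
def IsTest (φ : ℝ × ℝ → ℝ) : Prop := IsTestOn Omega φ

/-- Membership in the weighted Sobolev space `𝓗¹(Ω)`, with weak derivatives `gx, gy`:
`u ∈ L²(Ω)`, `gx = ∂ₓu`, `gy = ∂_y u` weakly, and `y^α₁ gx, x^α₂ gy ∈ L²(Ω)`. -/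
structure MemH1 (α₁ α₂ : ℝ) (u gx gy : ℝ × ℝ → ℝ) : Prop where
  memL2 : MemLp u 2 (volume.restrict Omega)
  weakX : HasWeakDerivXOn Omega u gx
  weakY : HasWeakDerivYOn Omega u gy
  wgx : MemLp (fun p => p.2 ^ α₁ * gx p) 2 (volume.restrict Omega)
  wgy : MemLp (fun p => p.1 ^ α₂ * gy p) 2 (volume.restrict Omega)

/-- The `𝓗¹(Ω)` norm of `u` (with weak derivatives `gx, gy`). -/
def H1Norm (α₁ α₂ : ℝ) (u gx gy : ℝ × ℝ → ℝ) : ℝ :=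
  Real.sqrt ((∫ p in Omega, (u p) ^ 2) +
    (∫ p in Omega, (p.2 ^ α₁ * gx p) ^ 2) +
    (∫ p in Omega, (p.1 ^ α₂ * gy p) ^ 2))

/-- Membership in `𝓗₀¹(Ω)`: member of `𝓗¹(Ω)` approximable in the `𝓗¹` norm by
test functions. -/
def MemH10 (α₁ α₂ : ℝ) (u gx gy : ℝ × ℝ → ℝ) : Prop :=
  MemH1 α₁ α₂ u gx gy ∧
  ∀ ε : ℝ, 0 < ε → ∃ φ : ℝ × ℝ → ℝ, IsTest φ ∧
    H1Norm α₁ α₂ (fun p => u p - φ p) (fun p => gx p - pdx φ p)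
      (fun p => gy p - pdy φ p) < ε

/-- Membership in `H₀(Ω) = {u ∈ 𝓗₀¹(Ω) : ∫_Ω V u² < ∞}`. -/
def MemH0 (α₁ α₂ : ℝ) (V u gx gy : ℝ × ℝ → ℝ) : Prop :=
  MemH10 α₁ α₂ u gx gy ∧
  IntegrableOn (fun p => V p * (u p) ^ 2) Omega volume

/-- The bilinear form `a(u,v)` associated with the sub-elliptic operator with potential `V`. -/
def aForm (α₁ α₂ : ℝ) (V u gx gy v hx hy : ℝ × ℝ → ℝ) : ℝ :=
  ∫ p in Omega, ((p.2 ^ α₁ * gx p) * (p.2 ^ α₁ * hx p) +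
    (p.1 ^ α₂ * gy p) * (p.1 ^ α₂ * hy p) + V p * u p * v p)

/-- The bilinear form `a₁(u,v)` (no potential). -/
def a1Form (α₁ α₂ : ℝ) (u gx gy v hx hy : ℝ × ℝ → ℝ) : ℝ :=
  ∫ p in Omega, ((p.2 ^ α₁ * gx p) * (p.2 ^ α₁ * hx p) +
    (p.1 ^ α₂ * gy p) * (p.1 ^ α₂ * hy p))

/-- Membership in `S_p = {V ∈ L^p(Ω) : V ≥ 0 a.e., ‖V‖_{L^p(Ω)} ≤ M}`. -/
def MemSp (ppow M : ℝ) (V : ℝ × ℝ → ℝ) : Prop :=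
  MemLp V (ENNReal.ofReal ppow) (volume.restrict Omega) ∧
  (∀ᵐ p ∂(volume.restrict Omega), 0 ≤ V p) ∧
  eLpNorm V (ENNReal.ofReal ppow) (volume.restrict Omega) ≤ ENNReal.ofReal M

/-- `u` (with weak derivatives `gx, gy`) is an eigenfunction of the sub-elliptic operator
with potential `V` for the eigenvalue `lam`. -/
def IsEigenfun (α₁ α₂ : ℝ) (V : ℝ × ℝ → ℝ) (lam : ℝ) (u gx gy : ℝ × ℝ → ℝ) : Prop :=
  MemH0 α₁ α₂ V u gx gy ∧
  ∀ v hx hy : ℝ × ℝ → ℝ, MemH0 α₁ α₂ V v hx hy →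
    aForm α₁ α₂ V u gx gy v hx hy = lam * ∫ p in Omega, u p * v p

/-- The first eigenvalue `λ₁(V) = inf { a(u,u) : u ∈ H₀(Ω), ‖u‖_{L²} = 1 }`. -/
def lam1 (α₁ α₂ : ℝ) (V : ℝ × ℝ → ℝ) : ℝ :=
  sInf { r | ∃ u gx gy : ℝ × ℝ → ℝ, MemH0 α₁ α₂ V u gx gy ∧
    (∫ p in Omega, (u p) ^ 2) = 1 ∧ r = aForm α₁ α₂ V u gx gy u gx gy }

/-- `sup { a(u,u) : u ∈ span(φ), ‖u‖_{L²(Ω)} = 1 }` for a finite family `φ` with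
weak derivatives `φx, φy`. -/
def rayleighSup (α₁ α₂ : ℝ) (V : ℝ × ℝ → ℝ) {k : ℕ} (φ φx φy : Fin k → ℝ × ℝ → ℝ) : ℝ :=
  sSup { s | ∃ c : Fin k → ℝ,
    (∫ p in Omega, (∑ i, c i * φ i p) ^ 2) = 1 ∧
    s = aForm α₁ α₂ V (fun p => ∑ i, c i * φ i p) (fun p => ∑ i, c i * φx i p)
      (fun p => ∑ i, c i * φy i p) (fun p => ∑ i, c i * φ i p)
      (fun p => ∑ i, c i * φx i p) (fun p => ∑ i, c i * φy i p) }

/-- The set of values `sup { a(u,u) : u ∈ E, ‖u‖ = 1 }` over `k`-dimensional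
subspaces `E` of `H₀(Ω)` (represented by `L²(Ω)`-linearly independent families of
`k` elements of `H₀(Ω)`). -/
def minmaxSet (α₁ α₂ : ℝ) (V : ℝ × ℝ → ℝ) (k : ℕ) : Set ℝ :=
  { r | ∃ φ φx φy : Fin k → ℝ × ℝ → ℝ,
      (∀ i, MemH0 α₁ α₂ V (φ i) (φx i) (φy i)) ∧
      (∀ c : Fin k → ℝ, (∀ᵐ p ∂(volume.restrict Omega), ∑ i, c i * φ i p = 0) → c = 0) ∧
      r = rayleighSup α₁ α₂ V φ φx φy }

/-- The `k`-th eigenvalue via the min-max principle. -/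
def lamk (α₁ α₂ : ℝ) (V : ℝ × ℝ → ℝ) (k : ℕ) : ℝ := sInf (minmaxSet α₁ α₂ V k)

/-- Membership in `U = (𝓗₀¹(Ω) ∩ L^{2q}(Ω)) \ {0}`. -/
def MemU (α₁ α₂ qe : ℝ) (u gx gy : ℝ × ℝ → ℝ) : Prop :=
  MemH10 α₁ α₂ u gx gy ∧
  MemLp u (ENNReal.ofReal (2 * qe)) (volume.restrict Omega) ∧
  ¬ (∀ᵐ p ∂(volume.restrict Omega), u p = 0)

/-- The functional `J(u) = (a₁(u,u) + M ‖u‖_{L^{2q}(Ω)}²) / ‖u‖_{L²(Ω)}²`. -/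
def Jfun (α₁ α₂ M qe : ℝ) (u gx gy : ℝ × ℝ → ℝ) : ℝ :=
  (a1Form α₁ α₂ u gx gy u gx gy +
    M * (∫ p in Omega, |u p| ^ (2 * qe)) ^ (1 / qe)) / (∫ p in Omega, (u p) ^ 2)

/-!
The weights vanish only on the boundary of `Ω`, and for some `s > 1` the powers `y ^ (-2 α₁ s)` and
`x ^ (-2 α₂ s)` are still integrable on `(0, 1)`, because `α₁, α₂ < 1 / 2`. Bounding `|φ| ^ (2 s)`
on each horizontal and each vertical line by the integral of its derivative along that line, and
applying Hölder's inequality with the inverse weights, gives an anisotropic Sobolev inequality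
`‖u‖_{4s}² ≤ K ‖y ^ α₁ ∂ₓu‖₂ ‖x ^ α₂ ∂_yu‖₂` on `𝓗₀¹(Ω)`.

A weak solution `u` is tested with a smooth nondecreasing truncation of itself. The potential term
then has a sign, and the Sobolev inequality turns the energy estimate into
`|{|u| > k + d}| ≤ K (‖f‖₂ / d) ^ (2 s) |{|u| > k}| ^ s`. As `s > 1`, Stampacchia's iteration
makes the level sets empty above a fixed multiple of `‖f‖₂`, so that `u` is bounded on all of `Ω`.
-/

open scoped ENNReal

/-! ### Stampacchia's iteration -/

theorem geometric_decay_step_le {C M D a t b : ℝ} (hM : 0 ≤ M) (hD : 0 < D) (hb : 1 < b)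
    (ha : a = t * (b - 1)) (hCD : C * M ^ (b - 1) * 2 ^ (t * b) ≤ D ^ a) (x : ℝ) :
    C / (D * 2 ^ (-(x + 1))) ^ a * (M * 2 ^ (-(t * x))) ^ b ≤ M * 2 ^ (-(t * (x + 1))) := by
  have h2 : (0 : ℝ) < 2 := two_pos
  have hexp : (2 : ℝ) ^ (-(t * x * b)) =
      2 ^ (t * b) * 2 ^ (-(t * (x + 1))) * 2 ^ (-((x + 1) * a)) := by
    rw [← Real.rpow_add h2, ← Real.rpow_add h2, ha]
    ring_nf
  have hMb : M ^ b = M ^ (b - 1) * M := by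
    rw [← Real.rpow_add_one' hM (by linarith), sub_add_cancel]
  calc C / (D * 2 ^ (-(x + 1))) ^ a * (M * 2 ^ (-(t * x))) ^ b
      = C * M ^ (b - 1) * 2 ^ (t * b) / D ^ a * (M * 2 ^ (-(t * (x + 1)))) := by
        rw [Real.mul_rpow hD.le (by positivity), Real.mul_rpow hM (by positivity),
          ← Real.rpow_mul h2.le, ← Real.rpow_mul h2.le, neg_mul, neg_mul, hexp, hMb]
        field_simp
    _ ≤ 1 * (M * 2 ^ (-(t * (x + 1)))) := by
        gcongr
        exact div_le_one_of_le₀ hCD (by positivity)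
    _ = _ := one_mul _

-- Along the levels `D * (1 - 2 ^ (-j))` the decay is geometric with ratio `2 ^ (-t)`, where
-- `t = a / (b - 1)`; the condition `hCD` on `D` is what propagates it.
theorem eq_zero_of_superlinear_decay {Φ : ℝ → ℝ} {C a b D : ℝ} (hΦ : ∀ k, 0 ≤ Φ k)
    (hanti : Antitone Φ) (hC : 0 ≤ C) (ha : 0 < a) (hb : 1 < b) (hD : 0 < D)
    (hdecay : ∀ k d, 0 ≤ k → 0 < d → Φ (k + d) ≤ C / d ^ a * Φ k ^ b)
    (hCD : C * Φ 0 ^ (b - 1) * 2 ^ (a / (b - 1) * b) ≤ D ^ a) : Φ D = 0 := by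
  set t := a / (b - 1)
  have hb' : 0 < b - 1 := sub_pos.2 hb
  have ht : 0 < t := div_pos ha hb'
  have hat : a = t * (b - 1) := (div_mul_cancel₀ a hb'.ne').symm
  have hlevel : ∀ j : ℕ, (2 : ℝ) ^ (-(j : ℝ)) ≤ 1 := fun j =>
    Real.rpow_le_one_of_one_le_of_nonpos one_le_two (by simp)
  have hgeom : ∀ j : ℕ, Φ (D * (1 - 2 ^ (-(j : ℝ)))) ≤ Φ 0 * 2 ^ (-(t * j)) := by
    intro j
    induction j with
    | zero => simp
    | succ j ih =>
      have hhalf : (2 : ℝ) ^ (-(j : ℝ)) = 2 * 2 ^ (-((j : ℝ) + 1)) := by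
        rw [neg_add, Real.rpow_add two_pos, Real.rpow_neg_one]
        ring
      have hstep : D * (1 - 2 ^ (-((j : ℝ) + 1))) =
          D * (1 - 2 ^ (-(j : ℝ))) + D * 2 ^ (-((j : ℝ) + 1)) := by rw [hhalf]; ring
      rw [Nat.cast_succ, hstep]
      refine (hdecay _ _ (mul_nonneg hD.le (sub_nonneg.2 (hlevel j))) (by positivity)).trans ?_
      refine le_trans ?_ (geometric_decay_step_le (hΦ 0) hD hb hat hCD j)
      gcongr
      exact hΦ _
  have hlim : Tendsto (fun j : ℕ => Φ 0 * 2 ^ (-(t * j))) atTop (nhds 0) := by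
    have hρ : Tendsto (fun j : ℕ => ((2 : ℝ) ^ (-t)) ^ j) atTop (nhds 0) :=
      tendsto_pow_atTop_nhds_zero_of_lt_one (by positivity)
        (Real.rpow_lt_one_of_one_lt_of_neg one_lt_two (neg_lt_zero.2 ht))
    simpa only [← Real.rpow_natCast, ← Real.rpow_mul two_pos.le, neg_mul, mul_zero]
      using hρ.const_mul (Φ 0)
  refine le_antisymm (ge_of_tendsto' hlim fun j => (hanti ?_).trans (hgeom j)) (hΦ D)
  exact mul_le_of_le_one_right hD.le (sub_le_self _ (by positivity))

theorem ae_abs_le_of_measureReal_decay {X : Type*} [MeasurableSpace X] {μ : Measure X}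
    [IsFiniteMeasure μ] {u : X → ℝ} {C a b D : ℝ} (hC : 0 ≤ C) (ha : 0 < a) (hb : 1 < b)
    (hD : 0 < D) (hdecay : ∀ k d, 0 ≤ k → 0 < d →
      μ.real {x | k + d < |u x|} ≤ C / d ^ a * μ.real {x | k < |u x|} ^ b)
    (hCD : C * μ.real univ ^ (b - 1) * 2 ^ (a / (b - 1) * b) ≤ D ^ a) :
    ∀ᵐ x ∂μ, |u x| ≤ D := by
  have hzero : μ.real {x | D < |u x|} = 0 := by
    refine eq_zero_of_superlinear_decay (Φ := fun k => μ.real {x | k < |u x|})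
      (fun _ => measureReal_nonneg) (fun k l hkl => measureReal_mono fun x hx => hkl.trans_lt hx)
      hC ha hb hD hdecay (le_trans ?_ hCD)
    have hpow : μ.real {x | 0 < |u x|} ^ (b - 1) ≤ μ.real univ ^ (b - 1) :=
      Real.rpow_le_rpow measureReal_nonneg (measureReal_mono (subset_univ _)) (sub_pos.2 hb).le
    exact mul_le_mul_of_nonneg_right (mul_le_mul_of_nonneg_left hpow hC) (by positivity)
  rw [ae_iff]
  simpa only [not_le] using (measureReal_eq_zero_iff).1 hzero

/-! ### Smooth truncation -/

/-- A smooth odd nondecreasing substitute for `sign t * min (max (|t| - k) 0) d`, for `0 ≤ k` and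
`0 < d`: it vanishes for `|t| ≤ k` and has absolute value `d` for `k + d ≤ |t|`. -/
def smoothTruncation (k d t : ℝ) : ℝ :=
  d * (Real.smoothTransition ((t - k) / d) - Real.smoothTransition ((-t - k) / d))

theorem exists_deriv_smoothTransition_mem_Icc :
    ∃ L : ℝ, ∀ t, deriv Real.smoothTransition t ∈ Icc 0 L := by
  have hcont : Continuous (deriv Real.smoothTransition) :=
    (Real.smoothTransition.contDiff (n := 1)).continuous_deriv le_rfl
  have hsupp : HasCompactSupport (deriv Real.smoothTransition) := by
    refine HasCompactSupport.intro (isCompact_Icc (a := (0 : ℝ)) (b := 1)) fun t ht => ?_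
    rcases lt_or_ge t 0 with h0 | h0
    · refine IsLocalMin.deriv_eq_zero (Eventually.of_forall fun y => ?_)
      rw [Real.smoothTransition.zero_of_nonpos h0.le]
      exact Real.smoothTransition.nonneg y
    · have h1 : 1 ≤ t := (not_le.1 fun h1 => ht ⟨h0, h1⟩).le
      refine IsLocalMax.deriv_eq_zero (Eventually.of_forall fun y => ?_)
      rw [Real.smoothTransition.one_of_one_le h1]
      exact Real.smoothTransition.le_one y
  obtain ⟨L, hL⟩ := hcont.bounded_above_of_compact_support hsupp
  exact ⟨L, fun t => ⟨Real.smoothTransition.monotone.deriv_nonneg, (le_abs_self _).trans (hL t)⟩⟩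

namespace smoothTruncation

theorem contDiff (k d : ℝ) {n : ℕ∞} : ContDiff ℝ n (smoothTruncation k d) :=
  contDiff_const.mul ((Real.smoothTransition.contDiff.comp (by fun_prop)).sub
    (Real.smoothTransition.contDiff.comp (by fun_prop)))

theorem deriv_eq {k d : ℝ} (hd : d ≠ 0) (t : ℝ) : deriv (smoothTruncation k d) t =
    deriv Real.smoothTransition ((t - k) / d) + deriv Real.smoothTransition ((-t - k) / d) := by
  have hσ (z : ℝ) : HasDerivAt Real.smoothTransition (deriv Real.smoothTransition z) z :=
    ((Real.smoothTransition.contDiff (n := 1)).differentiable one_ne_zero z).hasDerivAt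
  have hright : HasDerivAt (fun t : ℝ => (t - k) / d) (1 / d) t :=
    ((hasDerivAt_id t).sub_const k).div_const d
  have hleft : HasDerivAt (fun t : ℝ => (-t - k) / d) (-1 / d) t :=
    ((hasDerivAt_id t).neg.sub_const k).div_const d
  refine ((((hσ _).comp t hright).sub ((hσ _).comp t hleft)).const_mul d).deriv.trans ?_
  field_simp
  ring

theorem exists_deriv_mem_Icc :
    ∃ L : ℝ, ∀ k d t, d ≠ 0 → deriv (smoothTruncation k d) t ∈ Icc 0 L := by
  obtain ⟨L, hL⟩ := exists_deriv_smoothTransition_mem_Icc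
  refine ⟨L + L, fun k d t hd => ?_⟩
  rw [deriv_eq hd]
  exact ⟨add_nonneg (hL _).1 (hL _).1, add_le_add (hL _).2 (hL _).2⟩

theorem abs_eq {k d : ℝ} (hk : 0 ≤ k) (hd : 0 < d) (t : ℝ) :
    |smoothTruncation k d t| = d * Real.smoothTransition ((|t| - k) / d) := by
  have hvanish {z : ℝ} (hz : z ≤ 0) : Real.smoothTransition ((z - k) / d) = 0 :=
    Real.smoothTransition.zero_of_nonpos
      (div_nonpos_of_nonpos_of_nonneg (sub_nonpos.2 (hz.trans hk)) hd.le)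
  have habs (z : ℝ) : |Real.smoothTransition z| = Real.smoothTransition z :=
    abs_of_nonneg (Real.smoothTransition.nonneg z)
  rcases le_total 0 t with ht | ht
  · rw [smoothTruncation, hvanish (neg_nonpos.2 ht), sub_zero, abs_mul, habs, abs_of_pos hd,
      abs_of_nonneg ht]
  · rw [smoothTruncation, hvanish ht, zero_sub, abs_mul, abs_neg, habs, abs_of_pos hd,
      abs_of_nonpos ht]

theorem eq_zero {k d t : ℝ} (hk : 0 ≤ k) (hd : 0 < d) (ht : |t| ≤ k) :
    smoothTruncation k d t = 0 := by
  rw [← abs_eq_zero, abs_eq hk hd, Real.smoothTransition.zero_of_nonpos, mul_zero]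
  exact div_nonpos_of_nonpos_of_nonneg (sub_nonpos.2 ht) hd.le

theorem abs_le {k d : ℝ} (hk : 0 ≤ k) (hd : 0 < d) (t : ℝ) : |smoothTruncation k d t| ≤ d := by
  rw [abs_eq hk hd]
  exact mul_le_of_le_one_right hd.le (Real.smoothTransition.le_one _)

theorem abs_eq_of_le {k d t : ℝ} (hk : 0 ≤ k) (hd : 0 < d) (ht : k + d ≤ |t|) :
    |smoothTruncation k d t| = d := by
  rw [abs_eq hk hd, Real.smoothTransition.one_of_one_le, mul_one]
  rw [one_le_div hd]
  linarith

end smoothTruncation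

/-! ### Composition and convergence in `L^p` -/

theorem norm_sub_le_of_norm_deriv_le {G : ℝ → ℝ} {L : ℝ} (hG : Differentiable ℝ G)
    (hGL : ∀ t, ‖deriv G t‖ ≤ L) (s t : ℝ) : ‖G s - G t‖ ≤ L * ‖s - t‖ :=
  convex_univ.norm_image_sub_le_of_norm_deriv_le (fun x _ => hG x) (fun x _ => hGL x)
    (mem_univ t) (mem_univ s)

theorem abs_le_mul_abs_of_norm_deriv_le {G : ℝ → ℝ} {L : ℝ} (hG : Differentiable ℝ G)
    (hG0 : G 0 = 0) (hGL : ∀ t, ‖deriv G t‖ ≤ L) (t : ℝ) : |G t| ≤ L * |t| := by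
  simpa [hG0] using norm_sub_le_of_norm_deriv_le hG hGL t 0

theorem mul_nonneg_of_deriv_nonneg {G : ℝ → ℝ} (hG : Differentiable ℝ G) (hG0 : G 0 = 0)
    (hG' : ∀ t, 0 ≤ deriv G t) (t : ℝ) : 0 ≤ t * G t := by
  have hmono : Monotone G := monotone_of_deriv_nonneg hG hG'
  rcases le_total 0 t with ht | ht
  · exact mul_nonneg ht (hG0 ▸ hmono ht)
  · exact mul_nonneg_of_nonpos_of_nonpos ht (hG0 ▸ hmono ht)

section LpConvergence

variable {X : Type*} [MeasurableSpace X] {μ : Measure X} {p q : ℝ≥0∞}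

theorem tendsto_eLpNorm_zero_of_dominated {F : ℕ → X → ℝ} {B : X → ℝ} (hp : p ≠ ⊤)
    (hF : ∀ n, AEStronglyMeasurable (F n) μ) (hB : MemLp B p μ)
    (hFB : ∀ n, ∀ᵐ x ∂μ, ‖F n x‖ ≤ B x)
    (hlim : ∀ᵐ x ∂μ, Tendsto (fun n => F n x) atTop (nhds 0)) :
    Tendsto (fun n => eLpNorm (F n) p μ) atTop (nhds 0) := by
  rcases eq_or_ne p 0 with rfl | hp0
  · simp
  have hpos : 0 < p.toReal := ENNReal.toReal_pos hp0 hp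
  simp only [eLpNorm_eq_lintegral_rpow_enorm_toReal hp0 hp]
  suffices h : Tendsto (fun n => ∫⁻ x, ‖F n x‖ₑ ^ p.toReal ∂μ) atTop (nhds 0) by
    simpa [hpos] using h.ennrpow_const (1 / p.toReal)
  rw [← lintegral_zero (μ := μ)]
  refine tendsto_lintegral_of_dominated_convergence' (fun x => ‖B x‖ₑ ^ p.toReal)
    (fun n => (hF n).enorm.pow_const _) (fun n => ?_)
    (lintegral_rpow_enorm_lt_top_of_eLpNorm_lt_top hp0 hp hB.2).ne ?_
  · filter_upwards [hFB n] with x hx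
    gcongr
    exact enorm_le_iff_norm_le.2 (hx.trans (le_abs_self _))
  · filter_upwards [hlim] with x hx
    simpa [hpos] using (hx.enorm).ennrpow_const p.toReal

theorem tendsto_eLpNorm_mul_sub_mul {b : ℕ → X → ℝ} {b₀ : X → ℝ} {h : ℕ → X → ℝ} {h₀ : X → ℝ}
    {L : ℝ} (hp1 : 1 ≤ p) (hp : p ≠ ⊤) (hb : ∀ n, AEStronglyMeasurable (b n) μ)
    (hb₀ : AEStronglyMeasurable b₀ μ) (hh : ∀ n, MemLp (h n) p μ) (hh₀ : MemLp h₀ p μ)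
    (hbL : ∀ n x, ‖b n x‖ ≤ L) (hb₀L : ∀ x, ‖b₀ x‖ ≤ L)
    (hlimb : ∀ᵐ x ∂μ, Tendsto (fun n => b n x) atTop (nhds (b₀ x)))
    (hlimh : Tendsto (fun n => eLpNorm (h₀ - h n) p μ) atTop (nhds 0)) :
    Tendsto (fun n => eLpNorm (fun x => b₀ x * h₀ x - b n x * h n x) p μ) atTop (nhds 0) := by
  have hcoeff : Tendsto (fun n => eLpNorm (fun x => (b₀ x - b n x) * h₀ x) p μ) atTop (nhds 0) := by
    refine tendsto_eLpNorm_zero_of_dominated hp (fun n => (hb₀.sub (hb n)).mul hh₀.1)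
      (hh₀.norm.const_mul (L + L)) (fun n => Eventually.of_forall fun x => ?_) ?_
    · rw [norm_mul]
      gcongr
      exact (norm_sub_le _ _).trans (add_le_add (hb₀L x) (hbL n x))
    · filter_upwards [hlimb] with x hx
      simpa using (hx.const_sub (b₀ x)).mul_const (h₀ x)
  have hfun : Tendsto (fun n => eLpNorm (fun x => b n x * (h₀ - h n) x) p μ) atTop (nhds 0) := by
    have hL : Tendsto (fun n => ENNReal.ofReal L * eLpNorm (h₀ - h n) p μ) atTop (nhds 0) := by
      simpa using ENNReal.Tendsto.const_mul hlimh (Or.inr ENNReal.ofReal_ne_top)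
    refine tendsto_of_tendsto_of_tendsto_of_le_of_le tendsto_const_nhds hL (fun _ => zero_le)
      fun n => eLpNorm_le_mul_eLpNorm_of_ae_le_mul (Eventually.of_forall fun x => ?_) p
    rw [norm_mul]
    gcongr
    exact hbL n x
  refine tendsto_of_tendsto_of_tendsto_of_le_of_le tendsto_const_nhds
    (by simpa using hcoeff.add hfun) (fun _ => zero_le) fun n => ?_
  refine (eLpNorm_congr_ae (Eventually.of_forall fun x => ?_)).trans_le
    (eLpNorm_add_le ((hb₀.sub (hb n)).mul hh₀.1) ((hb n).mul (hh₀.sub (hh n)).1) hp1)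
  simp only [Pi.add_apply]
  ring

theorem tendsto_eLpNorm_comp_sub_comp {G : ℝ → ℝ} {L : ℝ} {h : ℕ → X → ℝ} {h₀ : X → ℝ}
    (hG : ∀ s t, ‖G s - G t‖ ≤ L * ‖s - t‖)
    (hlim : Tendsto (fun n => eLpNorm (h₀ - h n) p μ) atTop (nhds 0)) :
    Tendsto (fun n => eLpNorm (G ∘ h₀ - G ∘ h n) p μ) atTop (nhds 0) := by
  have hL : Tendsto (fun n => ENNReal.ofReal L * eLpNorm (h₀ - h n) p μ) atTop (nhds 0) := by
    simpa using ENNReal.Tendsto.const_mul hlim (Or.inr ENNReal.ofReal_ne_top)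
  exact tendsto_of_tendsto_of_tendsto_of_le_of_le tendsto_const_nhds hL (fun _ => zero_le)
    fun n => eLpNorm_le_mul_eLpNorm_of_ae_le_mul (Eventually.of_forall fun x => hG _ _) p

theorem tendsto_eLpNorm_of_tendsto_sub {f : ℕ → X → ℝ} {g : X → ℝ} (hp : 1 ≤ p)
    (hf : ∀ n, MemLp (f n) p μ) (hg : MemLp g p μ)
    (hlim : Tendsto (fun n => eLpNorm (g - f n) p μ) atTop (nhds 0)) :
    Tendsto (fun n => eLpNorm (f n) p μ) atTop (nhds (eLpNorm g p μ)) := by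
  have := Fact.mk hp
  have hLp := (Lp.tendsto_Lp_iff_tendsto_eLpNorm'' f hf g hg).2
    (by simpa only [eLpNorm_sub_comm] using hlim)
  simpa only [Lp.enorm_toLp] using hLp.enorm

theorem tendsto_integral_mul_of_tendsto_eLpNorm [ENNReal.HolderConjugate p q]
    {F : ℕ → X → ℝ} {F₀ g : X → ℝ} (hF : ∀ n, MemLp (F n) p μ) (hF₀ : MemLp F₀ p μ)
    (hg : MemLp g q μ) (hlim : Tendsto (fun n => eLpNorm (F₀ - F n) p μ) atTop (nhds 0)) :
    Tendsto (fun n => ∫ x, F n x * g x ∂μ) atTop (nhds (∫ x, F₀ x * g x ∂μ)) := by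
  refine tendsto_integral_of_L1' (fun x => F₀ x * g x) (hF₀.1.mul hg.1)
    (Eventually.of_forall fun n => (hF n).integrable_mul hg) ?_
  refine tendsto_of_tendsto_of_tendsto_of_le_of_le tendsto_const_nhds (h := fun n =>
    eLpNorm (F₀ - F n) p μ * eLpNorm g q μ) ?_ (fun _ => zero_le) fun n => ?_
  · simpa using ENNReal.Tendsto.mul_const hlim (Or.inr hg.2.ne)
  · rw [eLpNorm_sub_comm]
    refine (eLpNorm_congr_ae (Eventually.of_forall fun x => ?_)).trans_le
      (eLpNorm_smul_le_mul_eLpNorm hg.1 (hF₀.sub (hF n)).1)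
    simp only [Pi.sub_apply, Pi.smul_apply', smul_eq_mul]
    ring

theorem ofReal_integral_sq {f : X → ℝ} (hf : MemLp f 2 μ) :
    ENNReal.ofReal (∫ x, f x ^ 2 ∂μ) = eLpNorm f 2 μ ^ 2 := by
  rw [ofReal_integral_eq_lintegral_ofReal hf.integrable_sq (Eventually.of_forall fun x =>
    sq_nonneg _)]
  have h := eLpNorm_nnreal_pow_eq_lintegral (f := f) (μ := μ) (p := 2) two_ne_zero
  simp only [NNReal.coe_ofNat, ENNReal.coe_ofNat, ENNReal.rpow_ofNat] at h
  rw [h]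
  refine lintegral_congr fun x => ?_
  rw [← sq_abs, ENNReal.ofReal_pow (abs_nonneg _), ← Real.enorm_eq_ofReal_abs]

theorem toReal_eLpNorm_two {f : X → ℝ} (hf : MemLp f 2 μ) :
    (eLpNorm f 2 μ).toReal = √(∫ x, f x ^ 2 ∂μ) := by
  rw [eq_comm, Real.sqrt_eq_iff_eq_sq (integral_nonneg fun x => sq_nonneg _) ENNReal.toReal_nonneg,
    ← ENNReal.toReal_pow, ← ofReal_integral_sq hf,
    ENNReal.toReal_ofReal (integral_nonneg fun x => sq_nonneg _)]

theorem ofReal_integral_mul_le {f g : X → ℝ}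
    (hf : MemLp f 2 μ) (hg : MemLp g 2 μ) :
    ENNReal.ofReal (∫ x, f x * g x ∂μ) ≤ eLpNorm f 2 μ * eLpNorm g 2 μ := by
  have h1 := eLpNorm_smul_le_mul_eLpNorm (p := 2) (q := 2) (r := 1) hg.1 hf.1
  rw [eLpNorm_one_eq_lintegral_enorm] at h1
  refine le_trans ?_ h1
  calc ENNReal.ofReal (∫ x, f x * g x ∂μ) ≤ ‖∫ x, f x * g x ∂μ‖ₑ := by
        rw [← ofReal_norm]
        exact ENNReal.ofReal_le_ofReal (le_abs_self _)
    _ ≤ _ := enorm_integral_le_lintegral_enorm _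

end LpConvergence

/-! ### Weak derivatives -/

theorem memLp_mul_of_tsupport_subset {s : Set (ℝ × ℝ)} {w g : ℝ × ℝ → ℝ} (hs : IsOpen s)
    (hw : ContinuousOn w s) (hg : Continuous g) (hgc : HasCompactSupport g) (hgs : tsupport g ⊆ s)
    (p : ℝ≥0∞) (μ : Measure (ℝ × ℝ)) [IsFiniteMeasureOnCompacts μ] :
    MemLp (fun z => w z * g z) p μ :=
  ((hw.mul hg.continuousOn).continuous_of_tsupport_subset hs
    ((tsupport_mul_subset_right).trans hgs)).memLp_of_hasCompactSupport hgc.mul_left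

namespace IsTestOn

variable {s : Set (ℝ × ℝ)} {φ : ℝ × ℝ → ℝ}

theorem differentiable (hφ : IsTestOn s φ) : Differentiable ℝ φ :=
  hφ.1.differentiable (by simp)

theorem comp (hφ : IsTestOn s φ) {G : ℝ → ℝ} (hG : ContDiff ℝ (⊤ : ℕ∞) G) (hG0 : G 0 = 0) :
    IsTestOn s (G ∘ φ) :=
  ⟨hG.comp hφ.1, hφ.2.1.comp_left hG0, (tsupport_comp_subset hG0 φ).trans hφ.2.2⟩

theorem fderiv_comp_apply (hφ : IsTestOn s φ) {G : ℝ → ℝ} (hG : Differentiable ℝ G)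
    (z e : ℝ × ℝ) : fderiv ℝ (G ∘ φ) z e = deriv G (φ z) * fderiv ℝ φ z e := by
  rw [((hG (φ z)).hasDerivAt.comp_hasFDerivAt z (hφ.differentiable z).hasFDerivAt).fderiv]
  rfl

theorem eq_zero (hφ : IsTestOn s φ) {z : ℝ × ℝ} (hz : z ∉ s) : φ z = 0 :=
  image_eq_zero_of_notMem_tsupport fun h => hz (hφ.2.2 h)

theorem continuous_fderiv_apply (hφ : IsTestOn s φ) (e : ℝ × ℝ) :
    Continuous fun z => fderiv ℝ φ z e :=
  (hφ.1.continuous_fderiv (by simp)).clm_apply continuous_const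

theorem memLp_mul (hφ : IsTestOn s φ) (hs : IsOpen s) {w : ℝ × ℝ → ℝ} (hw : ContinuousOn w s)
    (p : ℝ≥0∞) (μ : Measure (ℝ × ℝ)) [IsFiniteMeasureOnCompacts μ] :
    MemLp (fun z => w z * φ z) p μ :=
  memLp_mul_of_tsupport_subset hs hw hφ.1.continuous hφ.2.1 hφ.2.2 p μ

theorem memLp_mul_fderiv (hφ : IsTestOn s φ) (hs : IsOpen s) {w : ℝ × ℝ → ℝ}
    (hw : ContinuousOn w s) (e : ℝ × ℝ) (p : ℝ≥0∞) (μ : Measure (ℝ × ℝ))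
    [IsFiniteMeasureOnCompacts μ] : MemLp (fun z => w z * fderiv ℝ φ z e) p μ :=
  memLp_mul_of_tsupport_subset hs hw (hφ.continuous_fderiv_apply e) (hφ.2.1.fderiv_apply ℝ e)
    ((tsupport_fderiv_apply_subset ℝ e).trans hφ.2.2) p μ

theorem memLp_fderiv (hφ : IsTestOn s φ) (e : ℝ × ℝ) (p : ℝ≥0∞) (μ : Measure (ℝ × ℝ))
    [IsFiniteMeasureOnCompacts μ] : MemLp (fun z => fderiv ℝ φ z e) p μ :=
  (hφ.continuous_fderiv_apply e).memLp_of_hasCompactSupport (hφ.2.1.fderiv_apply ℝ e)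

theorem memLp (hφ : IsTestOn s φ) (p : ℝ≥0∞) (μ : Measure (ℝ × ℝ))
    [IsFiniteMeasureOnCompacts μ] : MemLp φ p μ :=
  hφ.1.continuous.memLp_of_hasCompactSupport hφ.2.1

end IsTestOn

/-- `g` is a weak directional derivative of `u` along `e` on `s`; the coordinate directions
`(1, 0)` and `(0, 1)` give `HasWeakDerivXOn` and `HasWeakDerivYOn` definitionally. -/
def HasWeakLineDerivOn (e : ℝ × ℝ) (s : Set (ℝ × ℝ)) (u g : ℝ × ℝ → ℝ) : Prop :=
  LocallyIntegrableOn u s volume ∧ LocallyIntegrableOn g s volume ∧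
  ∀ φ : ℝ × ℝ → ℝ, IsTestOn s φ →
    ∫ z in s, u z * fderiv ℝ φ z e = - ∫ z in s, g z * φ z

theorem IsTestOn.hasWeakLineDerivOn {s : Set (ℝ × ℝ)} {φ : ℝ × ℝ → ℝ} (hφ : IsTestOn s φ)
    (e : ℝ × ℝ) : HasWeakLineDerivOn e s φ (fun z => fderiv ℝ φ z e) := by
  refine ⟨hφ.1.continuous.locallyIntegrable.locallyIntegrableOn s,
    (hφ.continuous_fderiv_apply e).locallyIntegrable.locallyIntegrableOn s, fun ψ hψ => ?_⟩
  rw [setIntegral_eq_integral_of_forall_compl_eq_zero fun z hz => by rw [hφ.eq_zero hz, zero_mul],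
    setIntegral_eq_integral_of_forall_compl_eq_zero fun z hz => by rw [hψ.eq_zero hz, mul_zero]]
  have hφc := hφ.1.continuous
  have hψc := hψ.1.continuous
  refine integral_mul_fderiv_eq_neg_fderiv_mul_of_integrable ?_ ?_ ?_
    (fun z _ => hφ.differentiable z) (fun z _ => hψ.differentiable z)
  · exact ((hφ.continuous_fderiv_apply e).mul hψc).integrable_of_hasCompactSupport hψ.2.1.mul_left
  · exact (hφc.mul (hψ.continuous_fderiv_apply e)).integrable_of_hasCompactSupport hφ.2.1.mul_right
  · exact (hφc.mul hψc).integrable_of_hasCompactSupport hψ.2.1.mul_left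

theorem locallyIntegrableOn_of_memLp_mul {s : Set (ℝ × ℝ)} {w g : ℝ × ℝ → ℝ} {p : ℝ≥0∞}
    (hp : 1 ≤ p) (hs : IsOpen s) (hw : ContinuousOn w s) (hw0 : ∀ z ∈ s, w z ≠ 0)
    (hwg : MemLp (fun z => w z * g z) p (volume.restrict s)) :
    LocallyIntegrableOn g s volume := by
  have hprod := (locallyIntegrableOn_of_locallyIntegrable_restrict
    (hwg.locallyIntegrable hp)).continuousOn_mul (hw.inv₀ hw0) hs.isLocallyClosed
  intro z hz
  obtain ⟨t, ht, hint⟩ := hprod z hz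
  refine ⟨t ∩ s, inter_mem ht self_mem_nhdsWithin, ?_⟩
  refine (hint.mono_set inter_subset_left).congr ?_
  filter_upwards [ae_restrict_of_ae_restrict_of_subset inter_subset_right
    (ae_restrict_mem hs.measurableSet)] with y hy
  exact inv_mul_cancel_left₀ (hw0 y hy) (g y)

theorem hasWeakLineDerivOn_of_tendsto {s : Set (ℝ × ℝ)} {e : ℝ × ℝ} {w u g : ℝ × ℝ → ℝ}
    {un gn : ℕ → ℝ × ℝ → ℝ} {p q : ℝ≥0∞} [hpq : ENNReal.HolderConjugate p q] (hs : IsOpen s)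
    (hw : ContinuousOn w s) (hw0 : ∀ z ∈ s, w z ≠ 0)
    (hu : MemLp u p (volume.restrict s)) (hun : ∀ n, MemLp (un n) p (volume.restrict s))
    (hg : MemLp (fun z => w z * g z) p (volume.restrict s))
    (hgn : ∀ n, MemLp (fun z => w z * gn n z) p (volume.restrict s))
    (hweak : ∀ n, HasWeakLineDerivOn e s (un n) (gn n))
    (hlimu : Tendsto (fun n => eLpNorm (u - un n) p (volume.restrict s)) atTop (nhds 0))
    (hlimg : Tendsto (fun n => eLpNorm ((fun z => w z * g z) - fun z => w z * gn n z) p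
      (volume.restrict s)) atTop (nhds 0)) : HasWeakLineDerivOn e s u g := by
  have hp : 1 ≤ p := ENNReal.HolderConjugate.one_le p q
  refine ⟨locallyIntegrableOn_of_locallyIntegrable_restrict (hu.locallyIntegrable hp),
    locallyIntegrableOn_of_memLp_mul hp hs hw hw0 hg, fun ψ hψ => ?_⟩
  have hweight (h : ℝ × ℝ → ℝ) :
      ∫ z in s, h z * ψ z = ∫ z in s, w z * h z * ((w z)⁻¹ * ψ z) :=
    setIntegral_congr_fun hs.measurableSet fun z hz => by
      have := hw0 z hz
      field_simp
  have hlhs := tendsto_integral_mul_of_tendsto_eLpNorm hun hu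
    (hψ.memLp_fderiv e q (volume.restrict s)) hlimu
  have hrhs := tendsto_integral_mul_of_tendsto_eLpNorm hgn hg
    (hψ.memLp_mul hs (hw.inv₀ hw0) q (volume.restrict s)) hlimg
  rw [hweight]
  refine tendsto_nhds_unique hlhs (hrhs.neg.congr fun n => ?_)
  rw [(hweak n).2.2 ψ hψ, hweight (gn n)]
  rfl

/-! ### The space `𝓗₀¹(Ω)` -/

theorem isOpen_Omega : IsOpen Omega := isOpen_Ioo.prod isOpen_Ioo

theorem volume_Omega : volume Omega = 1 := by
  rw [Omega, Measure.volume_eq_prod, Measure.prod_prod]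
  simp

instance : IsFiniteMeasure (volume.restrict Omega) :=
  ⟨by rw [Measure.restrict_apply_univ, volume_Omega]; exact ENNReal.one_lt_top⟩

theorem continuousOn_snd_rpow (α : ℝ) : ContinuousOn (fun z : ℝ × ℝ => z.2 ^ α) Omega :=
  continuousOn_snd.rpow_const fun _ hz => Or.inl hz.2.1.ne'

theorem continuousOn_fst_rpow (α : ℝ) : ContinuousOn (fun z : ℝ × ℝ => z.1 ^ α) Omega :=
  continuousOn_fst.rpow_const fun _ hz => Or.inl hz.1.1.ne'

section

variable {α₁ α₂ : ℝ}

theorem ofReal_H1Norm_sq {u gx gy : ℝ × ℝ → ℝ} (hu : MemLp u 2 (volume.restrict Omega))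
    (hgx : MemLp (fun z => z.2 ^ α₁ * gx z) 2 (volume.restrict Omega))
    (hgy : MemLp (fun z => z.1 ^ α₂ * gy z) 2 (volume.restrict Omega)) :
    ENNReal.ofReal (H1Norm α₁ α₂ u gx gy) ^ 2 = eLpNorm u 2 (volume.restrict Omega) ^ 2 +
      eLpNorm (fun z => z.2 ^ α₁ * gx z) 2 (volume.restrict Omega) ^ 2 +
      eLpNorm (fun z => z.1 ^ α₂ * gy z) 2 (volume.restrict Omega) ^ 2 := by
  rw [H1Norm, ← ofReal_integral_sq hu, ← ofReal_integral_sq hgx, ← ofReal_integral_sq hgy,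
    ← ENNReal.ofReal_pow (Real.sqrt_nonneg _), Real.sq_sqrt (by positivity),
    ENNReal.ofReal_add (by positivity) (by positivity),
    ENNReal.ofReal_add (by positivity) (by positivity)]

theorem tendsto_H1Norm_zero_iff {u gx gy : ℕ → ℝ × ℝ → ℝ}
    (hu : ∀ n, MemLp (u n) 2 (volume.restrict Omega))
    (hgx : ∀ n, MemLp (fun z => z.2 ^ α₁ * gx n z) 2 (volume.restrict Omega))
    (hgy : ∀ n, MemLp (fun z => z.1 ^ α₂ * gy n z) 2 (volume.restrict Omega)) :
    Tendsto (fun n => H1Norm α₁ α₂ (u n) (gx n) (gy n)) atTop (nhds 0) ↔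
      Tendsto (fun n => eLpNorm (u n) 2 (volume.restrict Omega)) atTop (nhds 0) ∧
      Tendsto (fun n => eLpNorm (fun z => z.2 ^ α₁ * gx n z) 2 (volume.restrict Omega)) atTop
        (nhds 0) ∧
      Tendsto (fun n => eLpNorm (fun z => z.1 ^ α₂ * gy n z) 2 (volume.restrict Omega)) atTop
        (nhds 0) := by
  have hsq n := ofReal_H1Norm_sq (hu n) (hgx n) (hgy n)
  constructor
  · intro h
    have h0 : Tendsto (fun n => ENNReal.ofReal (H1Norm α₁ α₂ (u n) (gx n) (gy n))) atTop
        (nhds 0) := by simpa using ENNReal.tendsto_ofReal h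
    have hle {a : ℕ → ℝ≥0∞}
        (ha : ∀ n, a n ^ 2 ≤ ENNReal.ofReal (H1Norm α₁ α₂ (u n) (gx n) (gy n)) ^ 2) :
        Tendsto a atTop (nhds 0) :=
      tendsto_of_tendsto_of_tendsto_of_le_of_le tendsto_const_nhds h0 (fun _ => zero_le)
        fun n => (ENNReal.pow_le_pow_left_iff two_ne_zero).1 (ha n)
    refine ⟨hle fun n => ?_, hle fun n => ?_, hle fun n => ?_⟩ <;> rw [hsq n]
    · exact le_self_add.trans le_self_add
    · exact le_add_self.trans le_self_add
    · exact le_add_self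
  · rintro ⟨h1, h2, h3⟩
    have h0 : Tendsto (fun n => ENNReal.ofReal (H1Norm α₁ α₂ (u n) (gx n) (gy n)) ^ 2) atTop
        (nhds 0) := by
      simp only [hsq]
      simpa using ((ENNReal.Tendsto.pow (n := 2) h1).add (ENNReal.Tendsto.pow (n := 2) h2)).add
        (ENNReal.Tendsto.pow (n := 2) h3)
    have hroot := (ENNReal.tendsto_toReal ENNReal.zero_ne_top).comp h0 |>.sqrt
    simpa [Function.comp_def, H1Norm, Real.sqrt_nonneg] using hroot

/-- The test functions `φ n` converge to `u` in the norm of `𝓗¹(Ω)`. The three components of the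
norm are recorded separately, as extended `L²` seminorms. -/
structure TestsTendsto (α₁ α₂ : ℝ) (φ : ℕ → ℝ × ℝ → ℝ) (u gx gy : ℝ × ℝ → ℝ) : Prop where
  isTest : ∀ n, IsTest (φ n)
  tendsto : Tendsto (fun n => eLpNorm (u - φ n) 2 (volume.restrict Omega)) atTop (nhds 0)
  tendsto_dx : Tendsto (fun n => eLpNorm ((fun z => z.2 ^ α₁ * gx z) -
    fun z => z.2 ^ α₁ * pdx (φ n) z) 2 (volume.restrict Omega)) atTop (nhds 0)
  tendsto_dy : Tendsto (fun n => eLpNorm ((fun z => z.1 ^ α₂ * gy z) -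
    fun z => z.1 ^ α₂ * pdy (φ n) z) 2 (volume.restrict Omega)) atTop (nhds 0)

theorem IsTest.memLp {φ : ℝ × ℝ → ℝ} (hφ : IsTest φ) : MemLp φ 2 (volume.restrict Omega) :=
  IsTestOn.memLp hφ _ _

theorem IsTest.memLp_dx {φ : ℝ × ℝ → ℝ} (hφ : IsTest φ) (α : ℝ) :
    MemLp (fun z => z.2 ^ α * pdx φ z) 2 (volume.restrict Omega) :=
  IsTestOn.memLp_mul_fderiv hφ isOpen_Omega (continuousOn_snd_rpow α) _ _ _

theorem IsTest.memLp_dy {φ : ℝ × ℝ → ℝ} (hφ : IsTest φ) (α : ℝ) :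
    MemLp (fun z => z.1 ^ α * pdy φ z) 2 (volume.restrict Omega) :=
  IsTestOn.memLp_mul_fderiv hφ isOpen_Omega (continuousOn_fst_rpow α) _ _ _

theorem testsTendsto_iff_tendsto_H1Norm {φ : ℕ → ℝ × ℝ → ℝ} {u gx gy : ℝ × ℝ → ℝ}
    (hφ : ∀ n, IsTest (φ n)) (hu : MemLp u 2 (volume.restrict Omega))
    (hgx : MemLp (fun z => z.2 ^ α₁ * gx z) 2 (volume.restrict Omega))
    (hgy : MemLp (fun z => z.1 ^ α₂ * gy z) 2 (volume.restrict Omega)) :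
    TestsTendsto α₁ α₂ φ u gx gy ↔ Tendsto (fun n => H1Norm α₁ α₂ (fun z => u z - φ n z)
      (fun z => gx z - pdx (φ n) z) (fun z => gy z - pdy (φ n) z)) atTop (nhds 0) := by
  have hdx n := hgx.sub ((hφ n).memLp_dx α₁)
  have hdy n := hgy.sub ((hφ n).memLp_dy α₂)
  simp only [Pi.sub_def, ← mul_sub] at hdx hdy
  refine Iff.trans ?_ (tendsto_H1Norm_zero_iff (fun n => hu.sub (hφ n).memLp) hdx hdy).symm
  simp only [mul_sub]
  exact ⟨fun h => ⟨h.tendsto, h.tendsto_dx, h.tendsto_dy⟩, fun h => ⟨hφ, h.1, h.2.1, h.2.2⟩⟩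

theorem TestsTendsto.memH10 {φ : ℕ → ℝ × ℝ → ℝ} {u gx gy : ℝ × ℝ → ℝ}
    (h : TestsTendsto α₁ α₂ φ u gx gy) (hu : MemLp u 2 (volume.restrict Omega))
    (hgx : MemLp (fun z => z.2 ^ α₁ * gx z) 2 (volume.restrict Omega))
    (hgy : MemLp (fun z => z.1 ^ α₂ * gy z) 2 (volume.restrict Omega)) :
    MemH10 α₁ α₂ u gx gy := by
  have hx : HasWeakLineDerivOn (1, 0) Omega u gx :=
    hasWeakLineDerivOn_of_tendsto (q := 2) isOpen_Omega (continuousOn_snd_rpow α₁)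
      (fun z hz => (Real.rpow_pos_of_pos hz.2.1 _).ne') hu (fun n => (h.isTest n).memLp) hgx
      (fun n => (h.isTest n).memLp_dx α₁) (fun n => (h.isTest n).hasWeakLineDerivOn (1, 0))
      h.tendsto h.tendsto_dx
  have hy : HasWeakLineDerivOn (0, 1) Omega u gy :=
    hasWeakLineDerivOn_of_tendsto (q := 2) isOpen_Omega (continuousOn_fst_rpow α₂)
      (fun z hz => (Real.rpow_pos_of_pos hz.1.1 _).ne') hu (fun n => (h.isTest n).memLp) hgy
      (fun n => (h.isTest n).memLp_dy α₂) (fun n => (h.isTest n).hasWeakLineDerivOn (0, 1))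
      h.tendsto h.tendsto_dy
  refine ⟨⟨hu, hx, hy, hgx, hgy⟩, fun ε hε => ?_⟩
  obtain ⟨n, hn⟩ := (((testsTendsto_iff_tendsto_H1Norm h.isTest hu hgx hgy).1 h).eventually_lt_const
    hε).exists
  exact ⟨φ n, h.isTest n, hn⟩

theorem MemH10.exists_testsTendsto {u gx gy : ℝ × ℝ → ℝ} (h : MemH10 α₁ α₂ u gx gy) :
    ∃ φ, TestsTendsto α₁ α₂ φ u gx gy ∧
      ∀ᵐ z ∂(volume.restrict Omega), Tendsto (fun n => φ n z) atTop (nhds (u z)) := by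
  choose φ hφ hlt using fun n : ℕ => h.2 (1 / (n + 1)) (by positivity)
  have hlim : TestsTendsto α₁ α₂ φ u gx gy := by
    refine (testsTendsto_iff_tendsto_H1Norm hφ h.1.memL2 h.1.wgx h.1.wgy).2 ?_
    exact squeeze_zero (fun n => Real.sqrt_nonneg _) (fun n => (hlt n).le)
      tendsto_one_div_add_atTop_nhds_zero_nat
  obtain ⟨ns, hns, hae⟩ := (tendstoInMeasure_of_tendsto_eLpNorm two_ne_zero
    (fun n => (hφ n).memLp.1) h.1.memL2.1
    (by simpa only [eLpNorm_sub_comm] using hlim.tendsto)).exists_seq_tendsto_ae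
  exact ⟨φ ∘ ns, ⟨fun n => hφ _, hlim.tendsto.comp hns.tendsto_atTop,
    hlim.tendsto_dx.comp hns.tendsto_atTop, hlim.tendsto_dy.comp hns.tendsto_atTop⟩, hae⟩

theorem TestsTendsto.comp {φ : ℕ → ℝ × ℝ → ℝ} {u gx gy : ℝ × ℝ → ℝ} {G : ℝ → ℝ} {L : ℝ}
    (h : TestsTendsto α₁ α₂ φ u gx gy)
    (hae : ∀ᵐ z ∂(volume.restrict Omega), Tendsto (fun n => φ n z) atTop (nhds (u z)))
    (hu : AEStronglyMeasurable u (volume.restrict Omega))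
    (hgx : MemLp (fun z => z.2 ^ α₁ * gx z) 2 (volume.restrict Omega))
    (hgy : MemLp (fun z => z.1 ^ α₂ * gy z) 2 (volume.restrict Omega))
    (hG : ContDiff ℝ (⊤ : ℕ∞) G) (hG0 : G 0 = 0) (hGL : ∀ t, ‖deriv G t‖ ≤ L) :
    TestsTendsto α₁ α₂ (fun n => G ∘ φ n) (G ∘ u) (fun z => deriv G (u z) * gx z)
      (fun z => deriv G (u z) * gy z) := by
  have hGd : Differentiable ℝ G := hG.differentiable (by simp)
  have hG' : Continuous (deriv G) := hG.continuous_deriv (by simp)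
  have hgrad {k : ℝ × ℝ → ℝ} {kn : ℕ → ℝ × ℝ → ℝ} (hk : MemLp k 2 (volume.restrict Omega))
      (hkn : ∀ n, MemLp (kn n) 2 (volume.restrict Omega))
      (hlim : Tendsto (fun n => eLpNorm (k - kn n) 2 (volume.restrict Omega)) atTop (nhds 0)) :=
    tendsto_eLpNorm_mul_sub_mul one_le_two ENNReal.ofNat_ne_top
      (fun n => (hG'.comp (h.isTest n).1.continuous).aestronglyMeasurable)
      (hG'.comp_aestronglyMeasurable hu) hkn hk (fun n z => hGL (φ n z)) (fun z => hGL (u z))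
      (hae.mono fun z hz => (hG'.tendsto (u z)).comp hz) hlim
  refine ⟨fun n => (h.isTest n).comp hG hG0, ?_, ?_, ?_⟩
  · exact tendsto_eLpNorm_comp_sub_comp (norm_sub_le_of_norm_deriv_le hGd hGL) h.tendsto
  · refine (hgrad hgx (fun n => (h.isTest n).memLp_dx α₁) h.tendsto_dx).congr fun n => ?_
    congr 1
    funext z
    simp only [Pi.sub_apply, pdx, (h.isTest n).fderiv_comp_apply hGd, Function.comp_apply]
    ring
  · refine (hgrad hgy (fun n => (h.isTest n).memLp_dy α₂) h.tendsto_dy).congr fun n => ?_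
    congr 1
    funext z
    simp only [Pi.sub_apply, pdy, (h.isTest n).fderiv_comp_apply hGd, Function.comp_apply]
    ring

theorem MemH10.comp {u gx gy : ℝ × ℝ → ℝ} {G : ℝ → ℝ} {L : ℝ} (h : MemH10 α₁ α₂ u gx gy)
    (hG : ContDiff ℝ (⊤ : ℕ∞) G) (hG0 : G 0 = 0) (hGL : ∀ t, ‖deriv G t‖ ≤ L) :
    MemH10 α₁ α₂ (G ∘ u) (fun z => deriv G (u z) * gx z) (fun z => deriv G (u z) * gy z) := by
  obtain ⟨φ, hφ, hae⟩ := h.exists_testsTendsto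
  have hu := h.1.memL2
  have hcoeff : AEStronglyMeasurable (fun z => deriv G (u z)) (volume.restrict Omega) :=
    (hG.continuous_deriv (by simp)).comp_aestronglyMeasurable hu.1
  have hGu : MemLp (G ∘ u) 2 (volume.restrict Omega) :=
    hu.of_le_mul (hG.continuous.comp_aestronglyMeasurable hu.1) (Eventually.of_forall fun z => 
      abs_le_mul_abs_of_norm_deriv_le (hG.differentiable (by simp)) hG0 hGL (u z))
  have hgrad {k : ℝ × ℝ → ℝ} (hk : MemLp k 2 (volume.restrict Omega)) :
      MemLp (fun z => deriv G (u z) * k z) 2 (volume.restrict Omega) :=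
    hk.mul' (memLp_top_of_bound hcoeff L (Eventually.of_forall fun z => hGL (u z)))
  refine (hφ.comp hae hu.1 h.1.wgx h.1.wgy hG hG0 hGL).memH10 hGu ?_ ?_
  · simpa only [mul_left_comm] using hgrad h.1.wgx
  · simpa only [mul_left_comm] using hgrad h.1.wgy

end

/-! ### An anisotropic Sobolev inequality -/

section MixedHolder

variable {X Y : Type*} [MeasurableSpace X] [MeasurableSpace Y] {μ : Measure X} {ν : Measure Y}
  {s : ℝ}

theorem sq_lintegral_mul_le {f g : X → ℝ≥0∞} (hf : AEMeasurable f μ) (hg : AEMeasurable g μ) :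
    (∫⁻ x, f x * g x ∂μ) ^ 2 ≤ (∫⁻ x, f x ^ 2 ∂μ) * ∫⁻ x, g x ^ 2 ∂μ := by
  have h := ENNReal.lintegral_mul_le_Lp_mul_Lq μ Real.HolderConjugate.two_two hf hg
  simp only [ENNReal.rpow_two, Pi.mul_apply] at h
  calc (∫⁻ x, f x * g x ∂μ) ^ 2
      ≤ ((∫⁻ x, f x ^ 2 ∂μ) ^ (1 / 2 : ℝ) * (∫⁻ x, g x ^ 2 ∂μ) ^ (1 / 2 : ℝ)) ^ 2 := by gcongr
    _ = _ := by
      rw [mul_pow, ← ENNReal.rpow_mul_natCast, ← ENNReal.rpow_mul_natCast]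
      norm_num

theorem lintegral_rpow_mul_sq_le (hs : 1 < s) {f A : Y → ℝ≥0∞}
    (hA : AEMeasurable A ν) (hf : AEMeasurable f ν) :
    ∫⁻ y, A y ^ (1 - 1 / s) * f y ^ 2 ∂ν ≤
      (∫⁻ y, A y ∂ν) ^ (1 - 1 / s) * (∫⁻ y, f y ^ (2 * s) ∂ν) ^ (1 / s) := by
  have hs' : s - 1 ≠ 0 := (sub_pos.2 hs).ne'
  have hexp : 1 / (s / (s - 1)) = 1 - 1 / s := by field_simp
  have hcancel : (1 - 1 / s) * (s / (s - 1)) = 1 := by field_simp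
  refine (ENNReal.lintegral_mul_le_Lp_mul_Lq ν (Real.HolderConjugate.conjExponent hs).symm
    (hA.pow_const _) (hf.pow_const 2)).trans_eq ?_
  simp only [Real.conjExponent, hexp, ← ENNReal.rpow_mul, hcancel, ENNReal.rpow_one,
    ← ENNReal.rpow_natCast_mul, Nat.cast_ofNat]

theorem lintegral_sq_le_of_rpow_le (hs : 1 < s) {ψ : X × Y → ℝ≥0∞} {A f : Y → ℝ≥0∞}
    {B : X → ℝ≥0∞} (hA : Measurable A) (hB : Measurable B) (hf : Measurable f)
    (hψA : ∀ z, ψ z ^ (2 * s) ≤ A z.2) (hψB : ∀ z, ψ z ^ (2 * s) ≤ B z.1) [SFinite ν] :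
    ∫⁻ z, (ψ z ^ (2 * s - 1) * f z.2) ^ 2 ∂μ.prod ν ≤
      (∫⁻ x, B x ∂μ) * ((∫⁻ y, A y ∂ν) ^ (1 - 1 / s) * (∫⁻ y, f y ^ (2 * s) ∂ν) ^ (1 / s)) := by
  have hs0 : 0 < s := zero_lt_one.trans hs
  have hs1 : 0 ≤ 1 - 1 / s := sub_nonneg.2 ((div_le_one hs0).2 hs.le)
  have hpointwise (z : X × Y) :
      (ψ z ^ (2 * s - 1) * f z.2) ^ 2 ≤ B z.1 * (A z.2 ^ (1 - 1 / s) * f z.2 ^ 2) := by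
    have hsplit : (ψ z ^ (2 * s - 1)) ^ 2 = ψ z ^ (2 * s) * (ψ z ^ (2 * s)) ^ (1 - 1 / s) := by
      rw [← ENNReal.rpow_mul, ← ENNReal.rpow_mul_natCast,
        ← ENNReal.rpow_add_of_nonneg _ _ (by positivity) (by positivity)]
      congr 1
      push_cast
      field_simp
      ring
    rw [mul_pow, hsplit, ← mul_assoc]
    gcongr
    · exact hψB z
    · exact hψA z
  refine (lintegral_mono hpointwise).trans ?_
  rw [lintegral_prod_mul (g := fun y => A y ^ (1 - 1 / s) * f y ^ 2) hB.aemeasurable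
    (by fun_prop)]
  gcongr
  exact lintegral_rpow_mul_sq_le hs hA.aemeasurable hf.aemeasurable

theorem sq_lintegral_rpow_mul_le [SFinite ν] (hs : 1 < s) {ψ D : X × Y → ℝ≥0∞}
    {A w : Y → ℝ≥0∞} {B : X → ℝ≥0∞} (hψ : Measurable ψ) (hD : Measurable D) (hA : Measurable A)
    (hB : Measurable B) (hw : Measurable w) (hw0 : ∀ᵐ y ∂ν, w y ≠ 0 ∧ w y ≠ ⊤)
    (hψA : ∀ z, ψ z ^ (2 * s) ≤ A z.2) (hψB : ∀ z, ψ z ^ (2 * s) ≤ B z.1) :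
    (∫⁻ z, ψ z ^ (2 * s - 1) * D z ∂μ.prod ν) ^ 2 ≤
      (∫⁻ x, B x ∂μ) * ((∫⁻ y, A y ∂ν) ^ (1 - 1 / s) *
        (∫⁻ y, (w y)⁻¹ ^ (2 * s) ∂ν) ^ (1 / s)) * ∫⁻ z, (w z.2 * D z) ^ 2 ∂μ.prod ν := by
  have hweight : ∫⁻ z, ψ z ^ (2 * s - 1) * D z ∂μ.prod ν =
      ∫⁻ z, ψ z ^ (2 * s - 1) * (w z.2)⁻¹ * (w z.2 * D z) ∂μ.prod ν := by
    refine lintegral_congr_ae ?_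
    filter_upwards [Measure.quasiMeasurePreserving_snd.ae hw0] with z hz
    rw [mul_assoc, ← mul_assoc _ (w z.2), ENNReal.inv_mul_cancel hz.1 hz.2, one_mul]
  rw [hweight]
  refine (sq_lintegral_mul_le (by fun_prop) (by fun_prop)).trans ?_
  gcongr
  exact lintegral_sq_le_of_rpow_le hs hA hB hw.inv hψA hψB

theorem sq_lintegral_rpow_mul_le_swap [SFinite μ] [SFinite ν] (hs : 1 < s) {ψ E : X × Y → ℝ≥0∞}
    {A : Y → ℝ≥0∞} {B v : X → ℝ≥0∞} (hψ : Measurable ψ) (hE : Measurable E) (hA : Measurable A)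
    (hB : Measurable B) (hv : Measurable v) (hv0 : ∀ᵐ x ∂μ, v x ≠ 0 ∧ v x ≠ ⊤)
    (hψA : ∀ z, ψ z ^ (2 * s) ≤ A z.2) (hψB : ∀ z, ψ z ^ (2 * s) ≤ B z.1) :
    (∫⁻ z, ψ z ^ (2 * s - 1) * E z ∂μ.prod ν) ^ 2 ≤
      (∫⁻ y, A y ∂ν) * ((∫⁻ x, B x ∂μ) ^ (1 - 1 / s) *
        (∫⁻ x, (v x)⁻¹ ^ (2 * s) ∂μ) ^ (1 / s)) * ∫⁻ z, (v z.1 * E z) ^ 2 ∂μ.prod ν := by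
  rw [← lintegral_prod_swap fun z => ψ z ^ (2 * s - 1) * E z,
    ← lintegral_prod_swap fun z => (v z.1 * E z) ^ 2]
  exact sq_lintegral_rpow_mul_le hs (hψ.comp measurable_swap) (hE.comp measurable_swap) hB hA hv
    hv0 (fun z => hψB z.swap) (fun z => hψA z.swap)

theorem le_rpow_of_sq_le_mul_rpow {T K : ℝ≥0∞} (hs : 0 < s) (hT : T ≠ ⊤)
    (h : T ^ 2 ≤ K * T ^ (2 - 1 / s)) : T ≤ K ^ s := by
  rcases eq_or_ne T 0 with rfl | hT0
  · exact zero_le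
  have hpow : T ^ 2 = T ^ (1 / s) * T ^ (2 - 1 / s) := by
    rw [← ENNReal.rpow_add _ _ hT0 hT, ← ENNReal.rpow_two]
    ring_nf
  rw [hpow, ENNReal.mul_le_mul_iff_left (by simp [hT0, hT]) (by simp [hT0, hT]), one_div] at h
  exact (ENNReal.rpow_inv_le_iff hs).1 h

-- Each hypothesis bounds one of `P`, `Q` by the other; in their product `P * Q` is left with the
-- exponent `2 - 1 / s < 2` on the right and can be absorbed.
theorem mul_le_of_sq_le_mul_rpow {P Q a b c d : ℝ≥0∞} (hs : 1 < s) (hP : P ≠ ⊤) (hQ : Q ≠ ⊤)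
    (hPsq : P ^ 2 ≤ Q * (P ^ (1 - 1 / s) * c ^ (1 / s)) * a)
    (hQsq : Q ^ 2 ≤ P * (Q ^ (1 - 1 / s) * d ^ (1 / s)) * b) :
    P * Q ≤ c * d * (a * b) ^ s := by
  have hs0 : 0 < s := zero_lt_one.trans hs
  have hs1 : 0 ≤ 1 - 1 / s := sub_nonneg.2 ((div_le_one hs0).2 hs.le)
  have hexp : 2 - 1 / s = 1 + (1 - 1 / s) := by ring
  have hsq : (P * Q) ^ 2 ≤ (c * d) ^ (1 / s) * (a * b) * (P * Q) ^ (2 - 1 / s) :=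
    calc (P * Q) ^ 2 ≤ (Q * (P ^ (1 - 1 / s) * c ^ (1 / s)) * a) *
          (P * (Q ^ (1 - 1 / s) * d ^ (1 / s)) * b) := by
          rw [mul_pow]
          gcongr
      _ = _ := by
          rw [hexp, ENNReal.rpow_add_of_nonneg _ _ zero_le_one hs1, ENNReal.rpow_one,
            ENNReal.mul_rpow_of_nonneg _ _ hs1, ENNReal.mul_rpow_of_nonneg _ _ (by positivity)]
          ring
  refine (le_rpow_of_sq_le_mul_rpow hs0 (ENNReal.mul_ne_top hP hQ) hsq).trans_eq ?_
  rw [ENNReal.mul_rpow_of_nonneg _ _ hs0.le, ← ENNReal.rpow_mul, one_div_mul_cancel hs0.ne',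
    ENNReal.rpow_one]

theorem lintegral_rpow_le_of_slice_le [SFinite μ] [SFinite ν] (hs : 1 < s)
    {ψ D E : X × Y → ℝ≥0∞} {A w : Y → ℝ≥0∞} {B v : X → ℝ≥0∞} (hψ : Measurable ψ)
    (hD : Measurable D) (hE : Measurable E) (hA : Measurable A) (hB : Measurable B)
    (hv : Measurable v) (hw : Measurable w) (hv0 : ∀ᵐ x ∂μ, v x ≠ 0 ∧ v x ≠ ⊤)
    (hw0 : ∀ᵐ y ∂ν, w y ≠ 0 ∧ w y ≠ ⊤)
    (hψA : ∀ z, ψ z ^ (2 * s) ≤ A z.2) (hψB : ∀ z, ψ z ^ (2 * s) ≤ B z.1)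
    (hAD : ∫⁻ y, A y ∂ν ≤ ∫⁻ z, ψ z ^ (2 * s - 1) * D z ∂μ.prod ν)
    (hBE : ∫⁻ x, B x ∂μ ≤ ∫⁻ z, ψ z ^ (2 * s - 1) * E z ∂μ.prod ν)
    (hAtop : ∫⁻ y, A y ∂ν ≠ ⊤) (hBtop : ∫⁻ x, B x ∂μ ≠ ⊤) :
    ∫⁻ z, ψ z ^ (4 * s) ∂μ.prod ν ≤
      (∫⁻ y, (w y)⁻¹ ^ (2 * s) ∂ν) * (∫⁻ x, (v x)⁻¹ ^ (2 * s) ∂μ) *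
        ((∫⁻ z, (w z.2 * D z) ^ 2 ∂μ.prod ν) * ∫⁻ z, (v z.1 * E z) ^ 2 ∂μ.prod ν) ^ s := by
  have hDsq := (pow_le_pow_left' hAD 2).trans
    (sq_lintegral_rpow_mul_le hs hψ hD hA hB hw hw0 hψA hψB)
  have hEsq := (pow_le_pow_left' hBE 2).trans
    (sq_lintegral_rpow_mul_le_swap hs hψ hE hA hB hv hv0 hψA hψB)
  calc ∫⁻ z, ψ z ^ (4 * s) ∂μ.prod ν ≤ ∫⁻ z, B z.1 * A z.2 ∂μ.prod ν := by
        refine lintegral_mono fun z => ?_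
        rw [show 4 * s = 2 * s + 2 * s by ring,
          ENNReal.rpow_add_of_nonneg _ _ (by linarith) (by linarith)]
        exact mul_le_mul' (hψB z) (hψA z)
    _ = (∫⁻ y, A y ∂ν) * ∫⁻ x, B x ∂μ := by
        rw [lintegral_prod_mul hB.aemeasurable hA.aemeasurable, mul_comm]
    _ ≤ _ := mul_le_of_sq_le_mul_rpow hs hAtop hBtop hDsq hEsq

end MixedHolder

theorem norm_deriv_norm_rpow {g : ℝ → ℝ} {m t : ℝ} (hm : 1 < m) (hg : DifferentiableAt ℝ g t) :
    ‖deriv (fun t => ‖g t‖ ^ m) t‖ = ‖g t‖ ^ (m - 1) * (m * ‖deriv g t‖) := by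
  have hderiv : HasDerivAt (fun t => ‖g t‖ ^ m) ((m * |g t| ^ (m - 2) * g t) * deriv g t) t :=
    (hasDerivAt_abs_rpow (g t) hm).comp t hg.hasDerivAt
  have hpow : |g t| ^ (m - 2) * |g t| = |g t| ^ (m - 1) := by
    rcases eq_or_ne (g t) 0 with h0 | h0
    · simp [h0, Real.zero_rpow (sub_pos.2 hm).ne']
    · rw [← Real.rpow_add_one (abs_pos.2 h0).ne']
      ring_nf
  rw [hderiv.deriv]
  simp only [Real.norm_eq_abs, abs_mul, abs_of_pos (zero_lt_one.trans hm), mul_assoc m,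
    abs_of_nonneg (Real.rpow_nonneg (abs_nonneg (g t)) _), hpow]
  ring

theorem enorm_rpow_le_lintegral_deriv {g : ℝ → ℝ} {m : ℝ} (hm : 1 < m) (hg : ContDiff ℝ 1 g)
    (hgc : HasCompactSupport g) {S : Set ℝ} (hgS : Function.support g ⊆ S) (x : ℝ) :
    ‖g x‖ₑ ^ m ≤ ∫⁻ t in S, ‖g t‖ₑ ^ (m - 1) * (ENNReal.ofReal m * ‖deriv g t‖ₑ) := by
  have hm0 : 0 < m := zero_lt_one.trans hm
  have hm1 : 0 < m - 1 := sub_pos.2 hm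
  have hsupp : Function.support
      (fun t => ‖g t‖ₑ ^ (m - 1) * (ENNReal.ofReal m * ‖deriv g t‖ₑ)) ⊆ S :=
    fun t ht => hgS fun h0 => ht (by simp [h0, hm1])
  have hpowc : HasCompactSupport fun t => ‖g t‖ ^ m :=
    hgc.comp_left (g := fun z : ℝ => ‖z‖ ^ m) (by simp [hm0.ne'])
  calc ‖g x‖ₑ ^ m = ‖(‖g x‖ ^ m)‖ₑ := by
        rw [Real.enorm_rpow_of_nonneg (norm_nonneg _) hm0.le, enorm_norm]
    _ ≤ ∫⁻ t in Iic x, ‖deriv (fun t => ‖g t‖ ^ m) t‖ₑ :=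
        hpowc.enorm_le_lintegral_Ici_deriv ((contDiff_norm_rpow hm).comp hg) x
    _ ≤ ∫⁻ t, ‖deriv (fun t => ‖g t‖ ^ m) t‖ₑ := setLIntegral_le_lintegral _ _
    _ = ∫⁻ t, ‖g t‖ₑ ^ (m - 1) * (ENNReal.ofReal m * ‖deriv g t‖ₑ) := by
        refine lintegral_congr fun t => ?_
        rw [← enorm_norm, norm_deriv_norm_rpow hm (hg.differentiable one_ne_zero t), enorm_mul,
          enorm_mul, Real.enorm_rpow_of_nonneg (norm_nonneg _) hm1.le, enorm_norm, enorm_norm,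
          Real.enorm_of_nonneg hm0.le]
    _ = _ := (setLIntegral_eq_of_support_subset hsupp).symm

theorem lintegral_inv_enorm_rpow_ne_top {α s : ℝ} (hαs : 2 * α * s < 1) :
    ∫⁻ t in Ioo (0 : ℝ) 1, ‖t ^ α‖ₑ⁻¹ ^ (2 * s) ≠ ⊤ := by
  have hint : IntegrableOn (fun t : ℝ => t ^ (-(2 * α * s))) (Ioo 0 1) :=
    (intervalIntegral.integrableOn_Ioo_rpow_iff zero_lt_one).2 (neg_lt_neg hαs)
  refine ne_of_eq_of_ne (setLIntegral_congr_fun measurableSet_Ioo fun t ht => ?_) hint.2.ne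
  have hpos : 0 < t ^ α := Real.rpow_pos_of_pos ht.1 _
  change ‖t ^ α‖ₑ⁻¹ ^ (2 * s) = ‖t ^ (-(2 * α * s))‖ₑ
  rw [Real.enorm_of_nonneg hpos.le, ← ENNReal.ofReal_inv_of_pos hpos,
    ENNReal.ofReal_rpow_of_pos (inv_pos.2 hpos), Real.enorm_of_nonneg (Real.rpow_nonneg ht.1.le _),
    ← Real.rpow_neg ht.1.le, ← Real.rpow_mul ht.1.le]
  ring_nf

theorem exists_one_lt_mul_lt_one {a b : ℝ} (ha : a < 1) (hb : b < 1) :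
    ∃ s : ℝ, 1 < s ∧ a * s < 1 ∧ b * s < 1 := by
  have hlim (c : ℝ) (hc : c < 1) : ∀ᶠ s in nhdsWithin (1 : ℝ) (Ioi 1), c * s < 1 :=
    nhdsWithin_le_nhds ((continuous_const_mul c).tendsto 1 |>.eventually_lt_const (by simpa))
  obtain ⟨s, hs1, has, hbs⟩ :=
    (eventually_mem_nhdsWithin.and ((hlim a ha).and (hlim b hb))).exists
  exact ⟨s, hs1, has, hbs⟩

/-- The constant of the Sobolev inequality with exponent `4 * s` for the weights `y ^ α₁` and
`x ^ α₂`. It is finite when `2 * α₁ * s < 1` and `2 * α₂ * s < 1`. -/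
def sobolevConst (α₁ α₂ s : ℝ) : ℝ≥0∞ :=
  (∫⁻ y in Ioo (0 : ℝ) 1, ‖y ^ α₁‖ₑ⁻¹ ^ (2 * s)) * (∫⁻ x in Ioo (0 : ℝ) 1, ‖x ^ α₂‖ₑ⁻¹ ^ (2 * s)) *
    ENNReal.ofReal (2 * s) ^ (4 * s)

theorem exists_sobolevConst_ne_top {α₁ α₂ : ℝ} (hα₁ : α₁ < 1 / 2) (hα₂ : α₂ < 1 / 2) :
    ∃ s, 1 < s ∧ sobolevConst α₁ α₂ s ≠ ⊤ := by
  obtain ⟨s, hs, h₁, h₂⟩ := exists_one_lt_mul_lt_one (a := 2 * α₁) (b := 2 * α₂)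
    (by linarith) (by linarith)
  refine ⟨s, hs, ENNReal.mul_ne_top (ENNReal.mul_ne_top ?_ ?_) ?_⟩
  · exact lintegral_inv_enorm_rpow_ne_top h₁
  · exact lintegral_inv_enorm_rpow_ne_top h₂
  · exact ENNReal.rpow_ne_top_of_nonneg (by positivity) ENNReal.ofReal_ne_top

theorem volume_restrict_Omega : volume.restrict Omega =
    ((volume : Measure ℝ).restrict (Ioo 0 1)).prod ((volume : Measure ℝ).restrict (Ioo 0 1)) := by
  rw [Measure.prod_restrict, ← Measure.volume_eq_prod, Omega]

theorem lintegral_enorm_rpow_mul_ne_top {φ g : ℝ × ℝ → ℝ} {q : ℝ} (c : ℝ) (hq : 0 ≤ q)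
    (hφ : Continuous φ) (hg : Continuous g) (hgc : HasCompactSupport g) (μ : Measure (ℝ × ℝ))
    [IsFiniteMeasureOnCompacts μ] :
    ∫⁻ z, ‖φ z‖ₑ ^ q * (ENNReal.ofReal c * ‖g z‖ₑ) ∂μ ≠ ⊤ := by
  have hint : Integrable (fun z => ‖φ z‖ ^ q * g z) μ :=
    ((hφ.norm.rpow_const fun _ => Or.inr hq).mul hg).integrable_of_hasCompactSupport hgc.mul_left
  have henorm (z : ℝ × ℝ) : ‖φ z‖ₑ ^ q * (ENNReal.ofReal c * ‖g z‖ₑ) =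
      ENNReal.ofReal c * ‖‖φ z‖ ^ q * g z‖ₑ := by
    rw [enorm_mul, Real.enorm_rpow_of_nonneg (norm_nonneg _) hq, enorm_norm]
    ring
  simp only [henorm]
  rw [lintegral_const_mul' _ _ ENNReal.ofReal_ne_top]
  exact ENNReal.mul_ne_top ENNReal.ofReal_ne_top hint.2.ne

theorem ae_enorm_rpow_ne_zero (α : ℝ) :
    ∀ᵐ t ∂(volume.restrict (Ioo (0 : ℝ) 1)), ‖t ^ α‖ₑ ≠ 0 ∧ ‖t ^ α‖ₑ ≠ ⊤ := by
  filter_upwards [ae_restrict_mem measurableSet_Ioo] with t ht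
  exact ⟨enorm_ne_zero.2 (Real.rpow_pos_of_pos ht.1 _).ne', enorm_ne_top⟩

section

variable {α₁ α₂ s : ℝ} {φ : ℝ × ℝ → ℝ}

theorem IsTest.continuous_pdx (hφ : IsTest φ) : Continuous (pdx φ) :=
  IsTestOn.continuous_fderiv_apply hφ (1, 0)

theorem IsTest.continuous_pdy (hφ : IsTest φ) : Continuous (pdy φ) :=
  IsTestOn.continuous_fderiv_apply hφ (0, 1)

theorem IsTest.enorm_rpow_le_lintegral_dx {m : ℝ} (hφ : IsTest φ) (hm : 1 < m) (z : ℝ × ℝ) :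
    ‖φ z‖ₑ ^ m ≤ ∫⁻ x in Ioo (0 : ℝ) 1,
      ‖φ (x, z.2)‖ₑ ^ (m - 1) * (ENNReal.ofReal m * ‖pdx φ (x, z.2)‖ₑ) := by
  have hderiv (x : ℝ) : deriv (fun x => φ (x, z.2)) x = pdx φ (x, z.2) :=
    ((IsTestOn.differentiable hφ _).hasFDerivAt.comp_hasDerivAt x
      ((hasDerivAt_id x).prodMk (hasDerivAt_const x z.2))).deriv
  have hsupp : Function.support (fun x => φ (x, z.2)) ⊆ Ioo 0 1 :=
    fun x hx => (not_imp_comm.1 (IsTestOn.eq_zero hφ) hx).1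
  simp only [← hderiv]
  refine enorm_rpow_le_lintegral_deriv (g := fun x => φ (x, z.2)) hm
    ((hφ.1.of_le (by simp)).comp (by fun_prop)) ?_ hsupp z.1
  exact .of_support_subset_isCompact isCompact_Icc (hsupp.trans Ioo_subset_Icc_self)

theorem IsTest.enorm_rpow_le_lintegral_dy {m : ℝ} (hφ : IsTest φ) (hm : 1 < m) (z : ℝ × ℝ) :
    ‖φ z‖ₑ ^ m ≤ ∫⁻ y in Ioo (0 : ℝ) 1,
      ‖φ (z.1, y)‖ₑ ^ (m - 1) * (ENNReal.ofReal m * ‖pdy φ (z.1, y)‖ₑ) := by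
  have hderiv (y : ℝ) : deriv (fun y => φ (z.1, y)) y = pdy φ (z.1, y) :=
    ((IsTestOn.differentiable hφ _).hasFDerivAt.comp_hasDerivAt y
      ((hasDerivAt_const y z.1).prodMk (hasDerivAt_id y))).deriv
  have hsupp : Function.support (fun y => φ (z.1, y)) ⊆ Ioo 0 1 :=
    fun y hy => (not_imp_comm.1 (IsTestOn.eq_zero hφ) hy).2
  simp only [← hderiv]
  refine enorm_rpow_le_lintegral_deriv (g := fun y => φ (z.1, y)) hm
    ((hφ.1.of_le (by simp)).comp (by fun_prop)) ?_ hsupp z.2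
  exact .of_support_subset_isCompact isCompact_Icc (hsupp.trans Ioo_subset_Icc_self)

theorem lintegral_mul_const_mul_enorm_sq {w g : ℝ × ℝ → ℝ} {c : ℝ} (μ : Measure (ℝ × ℝ)) :
    ∫⁻ z, (‖w z‖ₑ * (ENNReal.ofReal c * ‖g z‖ₑ)) ^ 2 ∂μ =
      ENNReal.ofReal c ^ 2 * eLpNorm (fun z => w z * g z) 2 μ ^ 2 := by
  have hsq := eLpNorm_nnreal_pow_eq_lintegral (p := 2) (μ := μ) (f := fun z => w z * g z)
    two_ne_zero
  simp only [NNReal.coe_ofNat, ENNReal.coe_ofNat, ENNReal.rpow_ofNat] at hsq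
  rw [hsq, ← lintegral_const_mul' _ _ (ENNReal.pow_ne_top ENNReal.ofReal_ne_top)]
  exact lintegral_congr fun z => by rw [enorm_mul]; ring

theorem IsTest.lintegral_rpow_le (hφ : IsTest φ) (hs : 1 < s) :
    ∫⁻ z in Omega, ‖φ z‖ₑ ^ (4 * s) ≤ sobolevConst α₁ α₂ s *
      (eLpNorm (fun z => z.2 ^ α₁ * pdx φ z) 2 (volume.restrict Omega) *
        eLpNorm (fun z => z.1 ^ α₂ * pdy φ z) 2 (volume.restrict Omega)) ^ (2 * s) := by
  have hm : 1 < 2 * s := by linarith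
  have hq : 0 ≤ 2 * s - 1 := by linarith
  have hmφ : Measurable φ := hφ.1.continuous.measurable
  have hmx : Measurable (pdx φ) := hφ.continuous_pdx.measurable
  have hmy : Measurable (pdy φ) := hφ.continuous_pdy.measurable
  have hX := lintegral_enorm_rpow_mul_ne_top (2 * s) hq hφ.1.continuous hφ.continuous_pdx
    (hφ.2.1.fderiv_apply ℝ _) (volume.restrict Omega)
  have hY := lintegral_enorm_rpow_mul_ne_top (2 * s) hq hφ.1.continuous hφ.continuous_pdy
    (hφ.2.1.fderiv_apply ℝ _) (volume.restrict Omega)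
  have hmX : Measurable fun z => ‖φ z‖ₑ ^ (2 * s - 1) * (ENNReal.ofReal (2 * s) * ‖pdx φ z‖ₑ) := by
    fun_prop
  have hmY : Measurable fun z => ‖φ z‖ₑ ^ (2 * s - 1) * (ENNReal.ofReal (2 * s) * ‖pdy φ z‖ₑ) := by
    fun_prop
  rw [volume_restrict_Omega] at hX hY ⊢
  set μ : Measure ℝ := volume.restrict (Ioo 0 1)
  have hX' := lintegral_prod_symm' (μ := μ) (ν := μ) _ hmX
  have hY' := lintegral_prod (μ := μ) (ν := μ) _ hmY.aemeasurable
  refine (lintegral_rpow_le_of_slice_le hs hmφ.enorm (hmx.enorm.const_mul _)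
    (hmy.enorm.const_mul _) hmX.lintegral_prod_left' hmY.lintegral_prod_right'
    (v := fun x => ‖x ^ α₂‖ₑ) (w := fun y => ‖y ^ α₁‖ₑ) (by fun_prop) (by fun_prop)
    (ae_enorm_rpow_ne_zero α₂) (ae_enorm_rpow_ne_zero α₁) (hφ.enorm_rpow_le_lintegral_dx hm)
    (hφ.enorm_rpow_le_lintegral_dy hm) hX'.ge hY'.ge (hX' ▸ hX) (hY' ▸ hY)).trans_eq ?_
  rw [lintegral_mul_const_mul_enorm_sq (w := fun z => z.2 ^ α₁),
    lintegral_mul_const_mul_enorm_sq (w := fun z => z.1 ^ α₂)]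
  set a := eLpNorm (fun z => z.2 ^ α₁ * pdx φ z) 2 (μ.prod μ)
  set b := eLpNorm (fun z => z.1 ^ α₂ * pdy φ z) 2 (μ.prod μ)
  set c := ENNReal.ofReal (2 * s)
  have hpow : (c ^ 2 * a ^ 2 * (c ^ 2 * b ^ 2)) ^ s = c ^ (4 * s) * (a * b) ^ (2 * s) := by
    rw [show c ^ 2 * a ^ 2 * (c ^ 2 * b ^ 2) = c ^ 4 * (a * b) ^ 2 by ring,
      ENNReal.mul_rpow_of_nonneg _ _ (by positivity), ENNReal.rpow_mul, ENNReal.rpow_mul (a * b),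
      ENNReal.rpow_ofNat, ENNReal.rpow_ofNat]
  rw [hpow, sobolevConst, mul_assoc _ (c ^ (4 * s))]

theorem MemH10.lintegral_rpow_le {u gx gy : ℝ × ℝ → ℝ} (h : MemH10 α₁ α₂ u gx gy) (hs : 1 < s)
    (hK : sobolevConst α₁ α₂ s ≠ ⊤) :
    ∫⁻ z in Omega, ‖u z‖ₑ ^ (4 * s) ≤ sobolevConst α₁ α₂ s *
      (eLpNorm (fun z => z.2 ^ α₁ * gx z) 2 (volume.restrict Omega) *
        eLpNorm (fun z => z.1 ^ α₂ * gy z) 2 (volume.restrict Omega)) ^ (2 * s) := by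
  obtain ⟨φ, hφ, hae⟩ := h.exists_testsTendsto
  have hdx := tendsto_eLpNorm_of_tendsto_sub one_le_two (fun n => (hφ.isTest n).memLp_dx α₁)
    h.1.wgx hφ.tendsto_dx
  have hdy := tendsto_eLpNorm_of_tendsto_sub one_le_two (fun n => (hφ.isTest n).memLp_dy α₂)
    h.1.wgy hφ.tendsto_dy
  have hbound := ENNReal.Tendsto.const_mul (a := sobolevConst α₁ α₂ s)
    ((ENNReal.Tendsto.mul hdx (Or.inr h.1.wgy.2.ne) hdy (Or.inr h.1.wgx.2.ne)).ennrpow_const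
      (2 * s)) (Or.inr hK)
  calc ∫⁻ z in Omega, ‖u z‖ₑ ^ (4 * s)
      = ∫⁻ z in Omega, liminf (fun n => ‖φ n z‖ₑ ^ (4 * s)) atTop :=
        lintegral_congr_ae <| hae.mono fun z hz => (hz.enorm.ennrpow_const _).liminf_eq.symm
    _ ≤ liminf (fun n => ∫⁻ z in Omega, ‖φ n z‖ₑ ^ (4 * s)) atTop :=
        lintegral_liminf_le' fun n =>
          ((hφ.isTest n).1.continuous.measurable.enorm.pow_const _).aemeasurable
    _ ≤ _ := (liminf_le_liminf (Eventually.of_forall fun n =>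
        (hφ.isTest n).lintegral_rpow_le hs)).trans_eq hbound.liminf_eq

end

/-! ### Energy estimate -/

-- `F(u) / u²` is bounded by `|L|`; where `u = 0` this also holds, since `x / 0 = 0`.
theorem integrable_mul_comp_of_abs_le_sq {X : Type*} [MeasurableSpace X] {μ : Measure X}
    {V u : X → ℝ} {F : ℝ → ℝ} {L : ℝ} (hVu : Integrable (fun x => V x * u x ^ 2) μ)
    (hu : AEStronglyMeasurable u μ) (hF : Measurable F) (hFL : ∀ t, |F t| ≤ L * t ^ 2) :
    Integrable (fun x => V x * F (u x)) μ := by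
  have hquot : AEStronglyMeasurable (fun x => F (u x) / u x ^ 2) μ :=
    ((hF.div (measurable_id.pow_const 2)).comp_aemeasurable hu.aemeasurable).aestronglyMeasurable
  have hbdd (t : ℝ) : ‖F t / t ^ 2‖ ≤ |L| := by
    rw [Real.norm_eq_abs, abs_div, abs_of_nonneg (sq_nonneg t)]
    exact div_le_of_le_mul₀ (sq_nonneg t) (abs_nonneg L)
      ((hFL t).trans (by gcongr; exact le_abs_self L))
  refine (hVu.bdd_mul hquot (Eventually.of_forall fun x => hbdd (u x))).congr
    (Eventually.of_forall fun x => ?_)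
  rcases eq_or_ne (u x) 0 with h0 | h0
  · have hF0 : F 0 = 0 := by simpa using hFL 0
    simp [h0, hF0]
  · change F (u x) / u x ^ 2 * (V x * u x ^ 2) = V x * F (u x)
    field_simp

theorem MemH0.comp {α₁ α₂ : ℝ} {V u gx gy : ℝ × ℝ → ℝ} {G : ℝ → ℝ} {L : ℝ}
    (h : MemH0 α₁ α₂ V u gx gy) (hG : ContDiff ℝ (⊤ : ℕ∞) G) (hG0 : G 0 = 0)
    (hGL : ∀ t, ‖deriv G t‖ ≤ L) :
    MemH0 α₁ α₂ V (G ∘ u) (fun z => deriv G (u z) * gx z) (fun z => deriv G (u z) * gy z) := by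
  refine ⟨h.1.comp hG hG0 hGL, integrable_mul_comp_of_abs_le_sq (F := fun t => G t ^ 2)
    (L := L ^ 2) h.2 h.1.1.memL2.1 (hG.continuous.measurable.pow_const 2) fun t => ?_⟩
  rw [abs_of_nonneg (sq_nonneg _), ← sq_abs (G t), ← sq_abs t, ← mul_pow]
  gcongr
  exact abs_le_mul_abs_of_norm_deriv_le (hG.differentiable (by simp)) hG0 hGL t

theorem MemH0.integrable_mul_comp {α₁ α₂ : ℝ} {V u gx gy : ℝ × ℝ → ℝ} {G : ℝ → ℝ} {L : ℝ}
    (h : MemH0 α₁ α₂ V u gx gy) (hG : Differentiable ℝ G) (hG0 : G 0 = 0)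
    (hGL : ∀ t, ‖deriv G t‖ ≤ L) :
    Integrable (fun z => V z * u z * G (u z)) (volume.restrict Omega) := by
  simp only [mul_assoc]
  refine integrable_mul_comp_of_abs_le_sq (F := fun t => t * G t) (L := L) h.2 h.1.1.memL2.1
    (measurable_id.mul hG.continuous.measurable) fun t => ?_
  rw [abs_mul, ← sq_abs t, sq, mul_left_comm]
  gcongr
  exact abs_le_mul_abs_of_norm_deriv_le hG hG0 hGL t

/-- `u` is a weak solution in `H₀(Ω)` of `-(y^{2α₁}∂ₓ²u + x^{2α₂}∂_y²u) + V u = f`. The functions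
`gx` and `gy` are the weak partial derivatives of `u`. -/
structure IsWeakSolution (α₁ α₂ : ℝ) (V f u gx gy : ℝ × ℝ → ℝ) : Prop where
  memH0 : MemH0 α₁ α₂ V u gx gy
  aForm_eq : ∀ v hx hy : ℝ × ℝ → ℝ, MemH0 α₁ α₂ V v hx hy →
    aForm α₁ α₂ V u gx gy v hx hy = ∫ z in Omega, f z * v z

section

variable {α₁ α₂ L : ℝ} {V f u gx gy : ℝ × ℝ → ℝ} {G : ℝ → ℝ}

theorem IsWeakSolution.integral_sq_le (h : IsWeakSolution α₁ α₂ V f u gx gy)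
    (hV : ∀ᵐ z ∂(volume.restrict Omega), 0 ≤ V z) (hG : ContDiff ℝ (⊤ : ℕ∞) G) (hG0 : G 0 = 0)
    (hG' : ∀ t, deriv G t ∈ Icc 0 L) :
    (∫ z in Omega, (z.2 ^ α₁ * (deriv G (u z) * gx z)) ^ 2) +
      ∫ z in Omega, (z.1 ^ α₂ * (deriv G (u z) * gy z)) ^ 2 ≤
      L * ∫ z in Omega, f z * (G ∘ u) z := by
  have hGd : Differentiable ℝ G := hG.differentiable (by simp)
  have hGL (t : ℝ) : ‖deriv G t‖ ≤ L := (abs_of_nonneg (hG' t).1).trans_le (hG' t).2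
  have hv := h.memH0.comp hG hG0 hGL
  have hu := h.memH0.1.1
  have hx : Integrable (fun z => (z.2 ^ α₁ * gx z) * (z.2 ^ α₁ * (deriv G (u z) * gx z)))
    (volume.restrict Omega) := hu.wgx.integrable_mul hv.1.1.wgx
  have hy : Integrable (fun z => (z.1 ^ α₂ * gy z) * (z.1 ^ α₂ * (deriv G (u z) * gy z)))
    (volume.restrict Omega) := hu.wgy.integrable_mul hv.1.1.wgy
  have hVG := h.memH0.integrable_mul_comp hGd hG0 hGL
  rw [← h.aForm_eq _ _ _ hv, ← integral_add hv.1.1.wgx.integrable_sq hv.1.1.wgy.integrable_sq,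
    aForm, ← integral_const_mul]
  refine integral_mono_ae (hv.1.1.wgx.integrable_sq.add hv.1.1.wgy.integrable_sq)
    (((hx.add hy).add hVG).const_mul L) ?_
  filter_upwards [hV] with z hz
  have hL : 0 ≤ L := (hG' 0).1.trans (hG' 0).2
  have hpot : 0 ≤ L * (V z * (u z * G (u z))) :=
    mul_nonneg hL (mul_nonneg hz (mul_nonneg_of_deriv_nonneg hGd hG0 (fun t => (hG' t).1) _))
  have hsq (a : ℝ) : (deriv G (u z) * a) ^ 2 ≤ L * (deriv G (u z) * a ^ 2) := by
    rw [mul_pow, sq, mul_assoc]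
    exact mul_le_mul_of_nonneg_right (hG' _).2 (mul_nonneg (hG' _).1 (sq_nonneg a))
  change (_ : ℝ) + _ ≤ _
  simp only [Function.comp_apply]
  linarith [hsq (z.2 ^ α₁ * gx z), hsq (z.1 ^ α₂ * gy z)]

theorem IsWeakSolution.eLpNorm_mul_eLpNorm_le (h : IsWeakSolution α₁ α₂ V f u gx gy)
    (hV : ∀ᵐ z ∂(volume.restrict Omega), 0 ≤ V z) (hf : MemLp f 2 (volume.restrict Omega))
    (hG : ContDiff ℝ (⊤ : ℕ∞) G) (hG0 : G 0 = 0) (hG' : ∀ t, deriv G t ∈ Icc 0 L) :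
    eLpNorm (fun z => z.2 ^ α₁ * (deriv G (u z) * gx z)) 2 (volume.restrict Omega) *
      eLpNorm (fun z => z.1 ^ α₂ * (deriv G (u z) * gy z)) 2 (volume.restrict Omega) ≤
      ENNReal.ofReal L * (eLpNorm f 2 (volume.restrict Omega) *
        eLpNorm (G ∘ u) 2 (volume.restrict Omega)) := by
  have hv := h.memH0.1.comp hG hG0 fun t => (abs_of_nonneg (hG' t).1).trans_le (hG' t).2
  have hL : 0 ≤ L := (hG' 0).1.trans (hG' 0).2
  have henergy := ENNReal.ofReal_le_ofReal (h.integral_sq_le hV hG hG0 hG')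
  rw [ENNReal.ofReal_add (by positivity) (by positivity), ofReal_integral_sq hv.1.wgx,
    ofReal_integral_sq hv.1.wgy, ENNReal.ofReal_mul hL] at henergy
  refine le_trans ?_ (henergy.trans (mul_le_mul_right (ofReal_integral_mul_le hf hv.1.memL2) _))
  rcases le_total (eLpNorm (fun z => z.2 ^ α₁ * (deriv G (u z) * gx z)) 2 (volume.restrict Omega))
    (eLpNorm (fun z => z.1 ^ α₂ * (deriv G (u z) * gy z)) 2 (volume.restrict Omega)) with hle | hle
  · exact (mul_le_mul_left hle _).trans ((sq _).ge.trans le_add_self)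
  · exact (mul_le_mul_right hle _).trans ((sq _).ge.trans le_self_add)

end

/-! ### Level sets of weak solutions -/

section

variable {X : Type*} [MeasurableSpace X] {μ : Measure X} {u : X → ℝ} {k d : ℝ}

theorem ae_le_of_forall_pos_ae_le_add {g : X → ℝ} {c : ℝ}
    (h : ∀ ε > 0, ∀ᵐ x ∂μ, g x ≤ c + ε) : ∀ᵐ x ∂μ, g x ≤ c := by
  have hall : ∀ᵐ x ∂μ, ∀ n : ℕ, g x ≤ c + 1 / (n + 1) :=
    ae_all_iff.2 fun n => h _ Nat.one_div_pos_of_nat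
  filter_upwards [hall] with x hx
  simpa using ge_of_tendsto' (tendsto_one_div_add_atTop_nhds_zero_nat.const_add c) hx

theorem rpow_mul_measure_lt_abs_le (hu : AEStronglyMeasurable u μ) (hk : 0 ≤ k) (hd : 0 < d)
    (q : ℝ) :
    ENNReal.ofReal d ^ q * μ {x | k + d < |u x|} ≤
      ∫⁻ x, ‖smoothTruncation k d (u x)‖ₑ ^ q ∂μ := by
  have hmeas : AEMeasurable (fun x => ‖smoothTruncation k d (u x)‖ₑ ^ q) μ :=
    ((smoothTruncation.contDiff k d (n := 0)).continuous.comp_aestronglyMeasurable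
      hu).enorm.pow_const q
  refine (mul_le_mul_right (measure_mono fun x hx => ?_) _).trans
    (mul_meas_ge_le_lintegral₀ hmeas (ENNReal.ofReal d ^ q))
  change ENNReal.ofReal d ^ q ≤ ‖smoothTruncation k d (u x)‖ₑ ^ q
  rw [Real.enorm_eq_ofReal_abs, smoothTruncation.abs_eq_of_le hk hd (le_of_lt hx)]

theorem eLpNorm_smoothTruncation_le (hk : 0 ≤ k) (hd : 0 < d) :
    eLpNorm (smoothTruncation k d ∘ u) 2 μ ≤
      ENNReal.ofReal d * μ {x | k < |u x|} ^ (1 / 2 : ℝ) := by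
  have hind : eLpNorm (smoothTruncation k d ∘ u) 2 μ ≤
      eLpNorm ({x | k < |u x|}.indicator fun _ => d) 2 μ := by
    refine eLpNorm_mono fun x => ?_
    by_cases hx : k < |u x|
    · rw [indicator_of_mem (s := {x | k < |u x|}) hx, Real.norm_of_nonneg hd.le]
      exact smoothTruncation.abs_le hk hd _
    · simp [smoothTruncation.eq_zero hk hd (not_lt.1 hx)]
  refine (hind.trans (eLpNorm_indicator_const_le d 2)).trans_eq ?_
  rw [Real.enorm_of_nonneg hd.le]
  simp

end

section

variable {α₁ α₂ s : ℝ}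

theorem exists_measure_lt_abs_le (hs : 1 < s) (hK : sobolevConst α₁ α₂ s ≠ ⊤) :
    ∃ K : ℝ≥0∞, K ≠ ⊤ ∧ ∀ V f u gx gy : ℝ × ℝ → ℝ,
      (∀ᵐ z ∂(volume.restrict Omega), 0 ≤ V z) → MemLp f 2 (volume.restrict Omega) →
      IsWeakSolution α₁ α₂ V f u gx gy → ∀ k d : ℝ, 0 ≤ k → 0 < d →
        ENNReal.ofReal d ^ (2 * s) * volume.restrict Omega {z | k + d < |u z|} ≤
          K * eLpNorm f 2 (volume.restrict Omega) ^ (2 * s) *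
            volume.restrict Omega {z | k < |u z|} ^ s := by
  obtain ⟨L, hL⟩ := smoothTruncation.exists_deriv_mem_Icc
  have hs0 : 0 ≤ 2 * s := by linarith
  refine ⟨sobolevConst α₁ α₂ s * ENNReal.ofReal L ^ (2 * s),
    ENNReal.mul_ne_top hK (ENNReal.rpow_ne_top_of_nonneg hs0 ENNReal.ofReal_ne_top),
    fun V f u gx gy hV hf h k d hk hd => ?_⟩
  set μ := volume.restrict Omega
  set Λ := ENNReal.ofReal L
  set δ := ENNReal.ofReal d
  have hG : ContDiff ℝ (⊤ : ℕ∞) (smoothTruncation k d) := smoothTruncation.contDiff k d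
  have hG0 : smoothTruncation k d 0 = 0 := smoothTruncation.eq_zero hk hd (by simpa)
  have hG' (t : ℝ) := hL k d t hd.ne'
  have hδ : δ ^ (2 * s) ≠ 0 ∧ δ ^ (2 * s) ≠ ⊤ := by
    simp [δ, hd, ENNReal.rpow_eq_zero_iff, ENNReal.rpow_eq_top_iff, hs0.not_gt]
  have henergy := (h.eLpNorm_mul_eLpNorm_le hV hf hG hG0 hG').trans
    (mul_le_mul_right (mul_le_mul_right (eLpNorm_smoothTruncation_le hk hd) _) _)
  rw [← ENNReal.mul_le_mul_iff_right hδ.1 hδ.2]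
  calc δ ^ (2 * s) * (δ ^ (2 * s) * μ {z | k + d < |u z|})
      = δ ^ (4 * s) * μ {z | k + d < |u z|} := by
        rw [← mul_assoc, ← ENNReal.rpow_add_of_nonneg _ _ hs0 hs0]
        ring_nf
    _ ≤ ∫⁻ z in Omega, ‖smoothTruncation k d (u z)‖ₑ ^ (4 * s) :=
        rpow_mul_measure_lt_abs_le h.memH0.1.1.memL2.1 hk hd (4 * s)
    _ ≤ sobolevConst α₁ α₂ s *
          (Λ * (eLpNorm f 2 μ * (δ * μ {z | k < |u z|} ^ (1 / 2 : ℝ)))) ^ (2 * s) := by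
        refine ((h.memH0.1.comp hG hG0 fun t => (abs_of_nonneg (hG' t).1).trans_le
          (hG' t).2).lintegral_rpow_le hs hK).trans ?_
        gcongr
    _ = _ := by
        simp only [ENNReal.mul_rpow_of_nonneg _ _ hs0, ← ENNReal.rpow_mul]
        ring_nf

theorem exists_measureReal_lt_abs_le (hs : 1 < s) (hK : sobolevConst α₁ α₂ s ≠ ⊤) :
    ∃ K : ℝ, 0 ≤ K ∧ ∀ V f u gx gy : ℝ × ℝ → ℝ,
      (∀ᵐ z ∂(volume.restrict Omega), 0 ≤ V z) → MemLp f 2 (volume.restrict Omega) →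
      IsWeakSolution α₁ α₂ V f u gx gy → ∀ k d : ℝ, 0 ≤ k → 0 < d →
        (volume.restrict Omega).real {z | k + d < |u z|} ≤
          K * √(∫ z in Omega, f z ^ 2) ^ (2 * s) / d ^ (2 * s) *
            (volume.restrict Omega).real {z | k < |u z|} ^ s := by
  obtain ⟨K, hKtop, hle⟩ := exists_measure_lt_abs_le hs hK
  refine ⟨K.toReal, ENNReal.toReal_nonneg, fun V f u gx gy hV hf h k d hk hd => ?_⟩
  have htop : K * eLpNorm f 2 (volume.restrict Omega) ^ (2 * s) *
      volume.restrict Omega {z | k < |u z|} ^ s ≠ ⊤ :=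
    ENNReal.mul_ne_top (ENNReal.mul_ne_top hKtop
      (ENNReal.rpow_ne_top_of_nonneg (by linarith) hf.2.ne))
      (ENNReal.rpow_ne_top_of_nonneg (by linarith) (measure_ne_top _ _))
  have hreal := ENNReal.toReal_mono htop (hle V f u gx gy hV hf h k d hk hd)
  simp only [ENNReal.toReal_mul, ← ENNReal.toReal_rpow, ENNReal.toReal_ofReal hd.le,
    toReal_eLpNorm_two hf, ← Measure.real_def] at hreal
  rw [div_mul_eq_mul_div, le_div_iff₀ (by positivity), mul_comm]
  exact hreal

theorem local_boundedness_general (hα₁ : α₁ < 1 / 2) (hα₂ : α₂ < 1 / 2) :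
    ∃ C : ℝ, 0 < C ∧ ∀ V f u gx gy : ℝ × ℝ → ℝ,
      (∀ᵐ z ∂(volume.restrict Omega), 0 ≤ V z) → MemLp f 2 (volume.restrict Omega) →
      IsWeakSolution α₁ α₂ V f u gx gy →
        ∀ᵐ z ∂(volume.restrict Omega), |u z| ≤ C * √(∫ z in Omega, f z ^ 2) := by
  obtain ⟨s, hs, hK⟩ := exists_sobolevConst_ne_top hα₁ hα₂
  obtain ⟨K, hK0, hdecay⟩ := exists_measureReal_lt_abs_le hs hK
  have ht : 0 < 2 * s := by linarith
  set M : ℝ := 2 ^ (2 * s / (s - 1) * s)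
  set c := (K * M) ^ (1 / (2 * s))
  have hc : c ^ (2 * s) = K * M := by
    rw [← Real.rpow_mul (by positivity), one_div_mul_cancel ht.ne', Real.rpow_one]
  refine ⟨c + 1, by positivity, fun V f u gx gy hV hf h => ?_⟩
  set F := √(∫ z in Omega, f z ^ 2)
  -- The level-set iteration ends at a positive level, whereas `F` may vanish: hence the `ε`.
  refine ae_le_of_forall_pos_ae_le_add fun ε hε => ?_
  refine ae_abs_le_of_measureReal_decay (by positivity) ht hs (by positivity)
    (hdecay V f u gx gy hV hf h) ?_
  have hvol : (volume.restrict Omega).real univ = 1 := by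
    simp [Measure.real_def, volume_Omega]
  calc K * F ^ (2 * s) * (volume.restrict Omega).real univ ^ (s - 1) * M
      = (c * F) ^ (2 * s) := by
        rw [hvol, Real.one_rpow, Real.mul_rpow (by positivity) (by positivity), hc]
        ring
    _ ≤ ((c + 1) * F + ε) ^ (2 * s) := by
        gcongr
        nlinarith [Real.sqrt_nonneg (∫ z in Omega, f z ^ 2)]

end

/-- Local boundedness of weak solutions: if `u ∈ H₀(Ω)` is a weak
solution of `Lu = f`, then for any `s₀` and `r > 0` with `closedBall s₀ (4r) ⊆ Ω`
there is `C > 0` with `ess sup_{B_r(s₀)} |u| ≤ C (‖u‖_{L²(B_{2r}(s₀))} + ‖f‖_{L²(Ω)})`. -/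
theorem local_boundedness (α₁ α₂ ppow : ℝ)
    (hα₁ : α₁ ∈ Ioo (0:ℝ) (1/2)) (hα₂ : α₂ ∈ Ioo (0:ℝ) (1/2))
    (hp : 1 < ppow) (V : ℝ × ℝ → ℝ)
    (hV : MemLp V (ENNReal.ofReal ppow) (volume.restrict Omega))
    (hVpos : ∀ᵐ p ∂(volume.restrict Omega), 0 ≤ V p)
    (f : ℝ × ℝ → ℝ) (hf : MemLp f 2 (volume.restrict Omega))
    (u gx gy : ℝ × ℝ → ℝ) (hu : MemH0 α₁ α₂ V u gx gy)
    (hsol : ∀ v hx hy : ℝ × ℝ → ℝ, MemH0 α₁ α₂ V v hx hy →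
      aForm α₁ α₂ V u gx gy v hx hy = ∫ p in Omega, f p * v p)
    (s₀ : ℝ × ℝ) (r : ℝ) (hr : 0 < r)
    (hball : Metric.closedBall s₀ (4*r) ⊆ Omega) :
    ∃ C : ℝ, 0 < C ∧ ∀ᵐ p ∂(volume.restrict (Metric.ball s₀ r)),
      |u p| ≤ C * (Real.sqrt (∫ q in Metric.ball s₀ (2*r), (u q) ^ 2) +
        Real.sqrt (∫ q in Omega, (f q) ^ 2)) := by
  obtain ⟨C, hC, hbound⟩ := local_boundedness_general hα₁.2 hα₂.2
  have hsub : Metric.ball s₀ r ⊆ Omega := fun z hz =>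
    hball (Metric.ball_subset_closedBall (Metric.ball_subset_ball (by linarith) hz))
  exact ⟨C, hC, (ae_restrict_of_ae_restrict_of_subset hsub
    (hbound V f u gx gy hVpos hf ⟨hu, hsol⟩)).mono fun z hz => hz.trans
      (mul_le_mul_of_nonneg_left (le_add_of_nonneg_left (Real.sqrt_nonneg _)) hC.le)⟩
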